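/- arXiv:2205.04687 — 10 statements merged into one kernel-verified Lean document; each statement's English description precedes it below -/
import Mathlib

section
/- For every probability mass function D on {1,...,n} there exists a signaling scheme (w_h, S_h)_{h=1,...,H} for D such that: (i) for every h, the smallest index i_h with S_h(i_h) > 0 satisfies R(S_h) = v_{i_h}, i.e., posting the lowest value in the support of S_h is a revenue-optimal price for S_h and this price sells the item with probability one; and (ii) \sum_{h=1}^H w_h * R(S_h) = R(D). Consequently the scheme is efficient and its expected consumer surplus equals \sum_{i=1}^n D(i) v_i - R(D), the maximum possible over all signaling schemes. -/
/-!
The theorem is proved for arbitrary nonnegative masses `m` on `{1,…,n}`, not only probability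
masses: `m` is a finite sum of *efficient* masses whose revenues add up to the revenue of `m`.
Normalizing each summand turns its total mass into the weight of a signal.

The decomposition is greedy. Let `A` be the support of `m`. The equal-revenue mass `E` on `A` is the
one whose tail at each `i ∈ A` equals `1 / v i`, so every price in `A` earns exactly `1`
(`exists_equalRevenue`). Let `t` be the largest scalar with `t • E ≤ m`. Then `m - t • E` is
nonnegative and has strictly smaller support, so one may induct on the size of the support.
Revenue is additive along this step because for a mass supported on `A` some optimal price lies in
`A` (`exists_mem_eq_monRev`), and on `A` the revenue curve of `m` is that of `m - t • E` shifted up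
by the constant `t`. This holds even though the support of the remainder is smaller than `A`.
-/

/-- The monopoly revenue of a pmf `g` on `{1,…,n}`: the maximum over posted prices
`v i` of `v i` times the probability that the value is at least `v i`. -/
noncomputable def MonRev (n : ℕ) (v : ℕ → ℝ) (g : ℕ → ℝ) : ℝ :=
  sSup {r : ℝ | ∃ i ∈ Finset.Icc 1 n, r = v i * ∑ i' ∈ Finset.Icc i n, g i'}

/-! ### Revenue of a mass -/

/-- A nonnegative mass on `{1,…,n}` for which selling at the lowest value of the support, hence to
everyone, is revenue optimal. The condition `∀ i < i₀` includes the index `0`. -/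
def Efficient (n : ℕ) (v g : ℕ → ℝ) : Prop :=
  (∀ i ∈ Finset.Icc 1 n, 0 ≤ g i) ∧ ∃ i₀ ∈ Finset.Icc 1 n,
    0 < g i₀ ∧ (∀ i < i₀, g i = 0) ∧ MonRev n v g = v i₀ * ∑ i ∈ Finset.Icc 1 n, g i

theorem monRev_isGreatest {n : ℕ} (hn : 1 ≤ n) (v g : ℕ → ℝ) :
    IsGreatest {r : ℝ | ∃ i ∈ Finset.Icc 1 n, r = v i * ∑ i' ∈ Finset.Icc i n, g i'}
      (MonRev n v g) := by
  have hfin : {r : ℝ | ∃ i ∈ Finset.Icc 1 n,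
      r = v i * ∑ i' ∈ Finset.Icc i n, g i'}.Finite := by
    refine ((Finset.Icc 1 n).finite_toSet.image
      (fun i => v i * ∑ i' ∈ Finset.Icc i n, g i')).subset ?_
    rintro r ⟨i, hi, rfl⟩
    exact ⟨i, hi, rfl⟩
  have hne : {r : ℝ | ∃ i ∈ Finset.Icc 1 n,
      r = v i * ∑ i' ∈ Finset.Icc i n, g i'}.Nonempty :=
    ⟨_, 1, Finset.mem_Icc.2 ⟨le_rfl, hn⟩, rfl⟩
  exact ⟨hne.csSup_mem hfin, fun r hr => le_csSup hfin.bddAbove hr⟩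

theorem le_monRev {n : ℕ} (v g : ℕ → ℝ) {i : ℕ} (hi : i ∈ Finset.Icc 1 n) :
    v i * ∑ j ∈ Finset.Icc i n, g j ≤ MonRev n v g := by
  have h := Finset.mem_Icc.1 hi
  exact (monRev_isGreatest (h.1.trans h.2) v g).2 ⟨i, hi, rfl⟩

theorem monRev_smul {n : ℕ} (hn : 1 ≤ n) (v g : ℕ → ℝ) {c : ℝ} (hc : 0 ≤ c) :
    MonRev n v (fun i => c * g i) = c * MonRev n v g := by
  have key : ∀ i, v i * ∑ j ∈ Finset.Icc i n, c * g j
      = c * (v i * ∑ j ∈ Finset.Icc i n, g j) := by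
    intro i
    rw [← Finset.mul_sum]; ring
  apply le_antisymm
  · obtain ⟨i, hi, h⟩ := (monRev_isGreatest hn v (fun i => c * g i)).1
    rw [h, key]
    exact mul_le_mul_of_nonneg_left (le_monRev v g hi) hc
  · obtain ⟨i, hi, h⟩ := (monRev_isGreatest hn v g).1
    rw [h, ← key]
    exact le_monRev v (fun i => c * g i) hi

theorem tail_eq_tail {n : ℕ} {g : ℕ → ℝ} {i j : ℕ} (hij : i ≤ j)
    (h : ∀ k ∈ Finset.Icc i n, k < j → g k = 0) :
    ∑ k ∈ Finset.Icc i n, g k = ∑ k ∈ Finset.Icc j n, g k := by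
  symm
  apply Finset.sum_subset (Finset.Icc_subset_Icc_left hij)
  intro k hk hk'
  apply h k hk
  simp only [Finset.mem_Icc] at hk hk'
  omega

/-- For a mass supported on `A`, some optimal price lies in `A`: raising a price to the next value
of `A` loses no buyer. -/
theorem exists_mem_eq_monRev {n : ℕ} {v : ℕ → ℝ} (hv : ∀ i ∈ Finset.Icc 1 n, 0 < v i)
    (hlt : ∀ i j, 1 ≤ i → i < j → j ≤ n → v i < v j)
    {A : Finset ℕ} (hA : A ⊆ Finset.Icc 1 n) (hne : A.Nonempty) {g : ℕ → ℝ}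
    (hg : ∀ i ∈ Finset.Icc 1 n, 0 ≤ g i) (hg0 : ∀ i ∈ Finset.Icc 1 n, i ∉ A → g i = 0) :
    ∃ i ∈ A, v i * ∑ j ∈ Finset.Icc i n, g j = MonRev n v g := by
  have tail_nonneg : ∀ i ∈ Finset.Icc 1 n, 0 ≤ ∑ j ∈ Finset.Icc i n, g j := by
    intro i hi
    apply Finset.sum_nonneg
    intro j hj
    apply hg
    simp only [Finset.mem_Icc] at *
    omega
  have hn : 1 ≤ n := by
    obtain ⟨a, ha⟩ := hne
    have := Finset.mem_Icc.1 (hA ha)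
    omega
  obtain ⟨i, hi, h⟩ := (monRev_isGreatest hn v g).1
  by_cases hB : (A.filter (fun a => i ≤ a)).Nonempty
  · set j := (A.filter (fun a => i ≤ a)).min' hB with hj
    have hjm : j ∈ A.filter (fun a => i ≤ a) := Finset.min'_mem _ _
    obtain ⟨hjA, hij⟩ := Finset.mem_filter.1 hjm
    refine ⟨j, hjA, le_antisymm (le_monRev v g (hA hjA)) ?_⟩
    have ht : ∑ k ∈ Finset.Icc i n, g k = ∑ k ∈ Finset.Icc j n, g k := by
      apply tail_eq_tail hij
      intro k hk hkj
      simp only [Finset.mem_Icc] at hk hi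
      apply hg0 k (Finset.mem_Icc.2 ⟨by omega, hk.2⟩)
      intro hkA
      have := Finset.min'_le (A.filter (fun a => i ≤ a)) k (Finset.mem_filter.2 ⟨hkA, hk.1⟩)
      omega
    rw [h, ht]
    apply mul_le_mul_of_nonneg_right _ (tail_nonneg j (hA hjA))
    rcases hij.eq_or_lt with e | e
    · rw [← e]
    · exact (hlt i j (Finset.mem_Icc.1 hi).1 e (Finset.mem_Icc.1 (hA hjA)).2).le
  · -- nothing of `A` lies above `i`, so the maximal revenue is zero and any price is optimal
    obtain ⟨a, ha⟩ := hne
    refine ⟨a, ha, le_antisymm (le_monRev v g (hA ha)) ?_⟩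
    have ht : ∑ k ∈ Finset.Icc i n, g k = 0 := by
      apply Finset.sum_eq_zero
      intro k hk
      simp only [Finset.mem_Icc] at hk hi
      apply hg0 k (Finset.mem_Icc.2 ⟨by omega, hk.2⟩)
      intro hkA
      exact hB ⟨k, Finset.mem_filter.2 ⟨hkA, hk.1⟩⟩
    rw [h, ht, mul_zero]
    exact mul_nonneg (hv a (hA ha)).le (tail_nonneg a (hA ha))

/-! ### Equal-revenue masses -/

/-- The (unnormalized) equal-revenue mass with support exactly `A`: every price in `A` earns
revenue `1`. -/
theorem exists_equalRevenue {n : ℕ} {v : ℕ → ℝ} (hv : ∀ i ∈ Finset.Icc 1 n, 0 < v i)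
    (hlt : ∀ i j, 1 ≤ i → i < j → j ≤ n → v i < v j) (A : Finset ℕ) :
    A ⊆ Finset.Icc 1 n → ∃ E : ℕ → ℝ, (∀ i ∈ A, 0 < E i) ∧ (∀ i, i ∉ A → E i = 0) ∧
      ∀ i ∈ A, v i * ∑ j ∈ Finset.Icc i n, E j = 1 := by
  induction A using Finset.induction_on_min with
  | empty => exact fun _ => ⟨fun _ => 0, by simp, by simp, by simp⟩
  | insert a A hmin ih =>
    intro hA
    obtain ⟨E, hpos, hzero, hrev⟩ := ih ((Finset.subset_insert a A).trans hA)
    have haI : a ∈ Finset.Icc 1 n := hA (Finset.mem_insert_self a A)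
    have ha := Finset.mem_Icc.1 haI
    have hva := hv a haI
    set c := ∑ j ∈ Finset.Icc (a + 1) n, E j with hc
    -- `c` is `0` or `1 / v (min A)`, so there is room for positive mass at `a`
    have hc1 : v a * c < 1 := by
      rcases A.eq_empty_or_nonempty with rfl | hne
      · have : c = 0 := Finset.sum_eq_zero fun j _ => hzero j (by simp)
        rw [this]; simp
      · have hb := A.min'_mem hne
        set b := A.min' hne
        have hab := hmin b hb
        have hbI := hA (Finset.mem_insert_of_mem hb)
        have hcb : c = ∑ j ∈ Finset.Icc b n, E j := by
          apply tail_eq_tail hab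
          intro k _ hk
          apply hzero
          intro hkA
          exact absurd (A.min'_le k hkA) (not_le.2 hk)
        have h1 := hrev b hb
        rw [← hcb] at h1
        have hcpos : 0 < c := by
          have := hv b hbI
          by_contra hcn
          nlinarith
        have := hlt a b ha.1 hab (Finset.mem_Icc.1 hbI).2
        nlinarith
    have htail : ∀ i, a < i → ∑ j ∈ Finset.Icc i n, Function.update E a (1 / v a - c) j
        = ∑ j ∈ Finset.Icc i n, E j := by
      intro i hi
      apply Finset.sum_congr rfl
      intro j hj
      have := (Finset.mem_Icc.1 hj).1
      rw [Function.update_of_ne (by omega)]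
    refine ⟨Function.update E a (1 / v a - c), ?_, ?_, ?_⟩
    · intro i hi
      rcases Finset.mem_insert.1 hi with rfl | hi
      · rw [Function.update_self, sub_pos, lt_div_iff₀ hva]
        linarith
      · rw [Function.update_of_ne (hmin i hi).ne']
        exact hpos i hi
    · intro i hi
      rw [Finset.mem_insert, not_or] at hi
      rw [Function.update_of_ne hi.1]
      exact hzero i hi.2
    · intro i hi
      rcases Finset.mem_insert.1 hi with rfl | hi
      · rw [← Finset.add_sum_Ioc_eq_sum_Icc ha.2, Function.update_self,
          ← Finset.Icc_add_one_left_eq_Ioc, htail (_ + 1) (lt_add_one _), ← hc]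
        field_simp
        ring
      · rw [htail i (hmin i hi)]
        exact hrev i hi

/-! ### Greedy decomposition -/

/-- The greedy decomposition, by induction on a bound `k` for the size of the support. -/
theorem exists_decomposition {n : ℕ} (hn : 1 ≤ n) {v : ℕ → ℝ}
    (hv : ∀ i ∈ Finset.Icc 1 n, 0 < v i)
    (hlt : ∀ i j, 1 ≤ i → i < j → j ≤ n → v i < v j) (k : ℕ) :
    ∀ m : ℕ → ℝ, (∀ i ∈ Finset.Icc 1 n, 0 ≤ m i) →
      ((Finset.Icc 1 n).filter (fun i => m i ≠ 0)).card ≤ k →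
      ∃ (H : ℕ) (T : ℕ → ℕ → ℝ), (∀ h ∈ Finset.Icc 1 H, Efficient n v (T h)) ∧
        (∀ i ∈ Finset.Icc 1 n, ∑ h ∈ Finset.Icc 1 H, T h i = m i) ∧
        ∑ h ∈ Finset.Icc 1 H, MonRev n v (T h) = MonRev n v m := by
  induction k with
  | zero =>
    intro m _ hcard
    have hzero : ∀ i ∈ Finset.Icc 1 n, m i = 0 := by
      intro i hi
      by_contra h
      have := Finset.card_pos.2
        (⟨i, Finset.mem_filter.2 ⟨hi, h⟩⟩ : ((Finset.Icc 1 n).filter fun i => m i ≠ 0).Nonempty)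
      omega
    refine ⟨0, fun _ _ => 0, by simp, fun i hi => by simp [hzero i hi], ?_⟩
    obtain ⟨i, hi, h⟩ := (monRev_isGreatest hn v m).1
    rw [h, Finset.sum_eq_zero (s := Finset.Icc i n)]
    · simp
    · intro j hj
      apply hzero
      simp only [Finset.mem_Icc] at *
      omega
  | succ k ih =>
    intro m hm hcard
    set A := (Finset.Icc 1 n).filter (fun i => m i ≠ 0) with hAdef
    have hA : A ⊆ Finset.Icc 1 n := Finset.filter_subset _ _
    have hm0 : ∀ i ∈ Finset.Icc 1 n, i ∉ A → m i = 0 := by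
      intro i hi hiA
      by_contra h
      exact hiA (Finset.mem_filter.2 ⟨hi, h⟩)
    rcases A.eq_empty_or_nonempty with hAe | hne
    · exact ih m hm (by rw [← hAdef, hAe]; simp)
    obtain ⟨E, hpos, hzero, hrev⟩ := exists_equalRevenue hv hlt A hA
    obtain ⟨a, haA, hamin⟩ := Finset.exists_min_image A (fun i => m i / E i) hne
    set t := m a / E a with ht
    have htpos : 0 < t := by
      apply div_pos _ (hpos a haA)
      exact lt_of_le_of_ne (hm a (hA haA)) (Ne.symm (Finset.mem_filter.1 haA).2)
    have hE : ∀ i, 0 ≤ E i := by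
      intro i
      by_cases hi : i ∈ A
      · exact (hpos i hi).le
      · exact (hzero i hi).ge
    have hm'0 : ∀ i ∈ Finset.Icc 1 n, i ∉ A → m i - t * E i = 0 := by
      intro i hi hiA
      rw [hm0 i hi hiA, hzero i hiA]; simp
    have hm' : ∀ i ∈ Finset.Icc 1 n, 0 ≤ m i - t * E i := by
      intro i hi
      by_cases hiA : i ∈ A
      · have h := hamin i hiA
        rw [le_div_iff₀ (hpos i hiA)] at h
        linarith
      · exact (hm'0 i hi hiA).ge
    have hcard' : ((Finset.Icc 1 n).filter (fun i => m i - t * E i ≠ 0)).card ≤ k := by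
      have hsub : (Finset.Icc 1 n).filter (fun i => m i - t * E i ≠ 0) ⊆ A.erase a := by
        intro i hi
        obtain ⟨hiI, hi0⟩ := Finset.mem_filter.1 hi
        refine Finset.mem_erase.2 ⟨?_, ?_⟩
        · rintro rfl
          apply hi0
          rw [ht, div_mul_cancel₀ _ (hpos _ haA).ne', sub_self]
        · by_contra hiA
          exact hi0 (hm'0 i hiI hiA)
      have h1 := Finset.card_le_card hsub
      rw [Finset.card_erase_of_mem haA] at h1
      omega
    obtain ⟨H, T, hT, hTsum, hTrev⟩ := ih (fun i => m i - t * E i) hm' hcard'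
    have hErev : ∀ i ∈ A, v i * ∑ j ∈ Finset.Icc i n, t * E j = t := by
      intro i hi
      rw [← Finset.mul_sum]
      linear_combination t * hrev i hi
    have hshift : ∀ i ∈ A, v i * ∑ j ∈ Finset.Icc i n, m j
        = v i * ∑ j ∈ Finset.Icc i n, (m j - t * E j) + t := by
      intro i hi
      rw [Finset.sum_sub_distrib]
      linear_combination hErev i hi
    have hMonE : MonRev n v (fun i => t * E i) = t := by
      obtain ⟨i, hi, h⟩ := exists_mem_eq_monRev hv hlt hA hne (g := fun i => t * E i)
        (fun i _ => mul_nonneg htpos.le (hE i)) (fun i _ hi => by simp [hzero i hi])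
      rw [← h]
      exact hErev i hi
    have hMon : MonRev n v m = MonRev n v (fun i => m i - t * E i) + t := by
      apply le_antisymm
      · obtain ⟨i, hi, h⟩ := exists_mem_eq_monRev hv hlt hA hne hm hm0
        rw [← h, hshift i hi]
        have := le_monRev v (fun i => m i - t * E i) (hA hi)
        simpa using this
      · obtain ⟨i, hi, h⟩ := exists_mem_eq_monRev hv hlt hA hne hm' hm'0
        rw [← h, ← hshift i hi]
        exact le_monRev v m (hA hi)
    have hEeff : Efficient n v (fun i => t * E i) := by
      have hb := A.min'_mem hne
      have hlow : ∀ i < A.min' hne, t * E i = 0 := by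
        intro i hi
        rw [hzero i fun hiA => absurd (A.min'_le i hiA) (not_le.2 hi), mul_zero]
      refine ⟨fun i _ => mul_nonneg htpos.le (hE i), A.min' hne, hA hb,
        mul_pos htpos (hpos _ hb), hlow, ?_⟩
      rw [hMonE, tail_eq_tail (Finset.mem_Icc.1 (hA hb)).1 fun i _ hi => hlow i hi, hErev _ hb]
    have hold : ∀ h ∈ Finset.Icc 1 H,
        (if h ≤ H then T h else fun i => t * E i) = T h := fun h hh =>
      if_pos (Finset.mem_Icc.1 hh).2
    have hnew : (if H + 1 ≤ H then T (H + 1) else fun i => t * E i) = fun i => t * E i :=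
      if_neg (by omega)
    refine ⟨H + 1, fun h => if h ≤ H then T h else fun i => t * E i, ?_, ?_, ?_⟩
    · intro h hh
      by_cases hH : h ≤ H
      · simp only [if_pos hH]
        exact hT h (Finset.mem_Icc.2 ⟨(Finset.mem_Icc.1 hh).1, hH⟩)
      · simp only [if_neg hH]
        exact hEeff
    · intro i hi
      rw [Finset.sum_Icc_succ_top (by omega)]
      beta_reduce
      rw [hnew,
        Finset.sum_congr rfl fun h hh => congrFun (hold h hh) i, hTsum i hi]
      ring
    · rw [Finset.sum_Icc_succ_top (by omega)]
      beta_reduce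
      rw [hnew,
        Finset.sum_congr rfl fun h hh => congrArg (MonRev n v) (hold h hh), hTrev, hMonE, hMon]

/-! ### Normalization to signals -/

/-- Bergemann–Brooks–Morris: for every prior `D` on values `0 < v 1 < ⋯ < v n` there is a
Bayes-plausible signaling scheme such that for each signal, posting the lowest value in its
support is revenue optimal (so the item always sells), and the expected revenue over signals
equals the monopoly revenue of the prior.  Consequently the expected consumer surplus equals
`∑ i, D i * v i - MonRev n v D`, the maximum possible over all signaling schemes. -/
theorem stmt0
    (n : ℕ) (hn : 1 ≤ n) (v : ℕ → ℝ)
    (hvpos : 0 < v 1)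
    (hvmono : ∀ i, 1 ≤ i → i < n → v i < v (i + 1))
    (D : ℕ → ℝ)
    (hD0 : ∀ i ∈ Finset.Icc 1 n, 0 ≤ D i)
    (hD1 : ∑ i ∈ Finset.Icc 1 n, D i = 1) :
    ∃ (H : ℕ) (w : ℕ → ℝ) (S : ℕ → ℕ → ℝ),
      1 ≤ H ∧
      -- positive weights summing to one
      (∀ h ∈ Finset.Icc 1 H, 0 < w h) ∧
      (∑ h ∈ Finset.Icc 1 H, w h = 1) ∧
      -- each signal is a pmf on {1,…,n}
      (∀ h ∈ Finset.Icc 1 H,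
        (∀ i ∈ Finset.Icc 1 n, 0 ≤ S h i) ∧ ∑ i ∈ Finset.Icc 1 n, S h i = 1) ∧
      -- Bayes plausibility
      (∀ i ∈ Finset.Icc 1 n, ∑ h ∈ Finset.Icc 1 H, w h * S h i = D i) ∧
      -- (i) for every signal, the lowest value in its support is a revenue-optimal price
      (∀ h ∈ Finset.Icc 1 H, ∃ i₀ ∈ Finset.Icc 1 n,
        0 < S h i₀ ∧ (∀ i < i₀, S h i = 0) ∧ MonRev n v (S h) = v i₀) ∧
      -- (ii) expected revenue equals the monopoly revenue of the prior
      (∑ h ∈ Finset.Icc 1 H, w h * MonRev n v (S h) = MonRev n v D) ∧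
      -- consequence: expected consumer surplus is the maximum possible
      (∑ h ∈ Finset.Icc 1 H,
          w h * ((∑ i ∈ Finset.Icc 1 n, S h i * v i) - MonRev n v (S h))
        = (∑ i ∈ Finset.Icc 1 n, D i * v i) - MonRev n v D) := by
  have hlt : ∀ i j, 1 ≤ i → i < j → j ≤ n → v i < v j := by
    intro i j hi hij
    induction j, hij using Nat.le_induction with
    | base => exact fun hj => hvmono i hi hj
    | succ j hij ih =>
      intro hj
      exact (ih (by omega)).trans (hvmono j (by omega) hj)
  have hv : ∀ i ∈ Finset.Icc 1 n, 0 < v i := by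
    intro i hi
    obtain ⟨h1, h2⟩ := Finset.mem_Icc.1 hi
    rcases h1.eq_or_lt with rfl | h
    · exact hvpos
    · exact hvpos.trans (hlt 1 i le_rfl h h2)
  obtain ⟨H, T, hT, hTsum, hTrev⟩ := exists_decomposition hn hv hlt _ D hD0 le_rfl
  set w : ℕ → ℝ := fun h => ∑ i ∈ Finset.Icc 1 n, T h i with hw
  have hwpos : ∀ h ∈ Finset.Icc 1 H, 0 < w h := by
    intro h hh
    obtain ⟨hnn, i₀, hi₀, hp, -⟩ := hT h hh
    exact Finset.sum_pos' hnn ⟨i₀, hi₀, hp⟩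
  have hwsum : ∑ h ∈ Finset.Icc 1 H, w h = 1 := by
    rw [hw, Finset.sum_comm, Finset.sum_congr rfl hTsum, hD1]
  have hH : 1 ≤ H := by
    by_contra h
    have : H = 0 := by omega
    subst this
    simp at hwsum
  have hwS : ∀ h ∈ Finset.Icc 1 H, ∀ i, w h * ((w h)⁻¹ * T h i) = T h i := by
    intro h hh i
    rw [mul_inv_cancel_left₀ (hwpos h hh).ne']
  have hMon : ∀ h ∈ Finset.Icc 1 H,
      MonRev n v (fun i => (w h)⁻¹ * T h i) = (w h)⁻¹ * MonRev n v (T h) := fun h hh =>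
    monRev_smul hn v (T h) (inv_nonneg.2 (hwpos h hh).le)
  have hbayes : ∀ i ∈ Finset.Icc 1 n,
      ∑ h ∈ Finset.Icc 1 H, w h * ((w h)⁻¹ * T h i) = D i := by
    intro i hi
    rw [Finset.sum_congr rfl fun h hh => hwS h hh i, hTsum i hi]
  have hrev : ∑ h ∈ Finset.Icc 1 H, w h * MonRev n v (fun i => (w h)⁻¹ * T h i)
      = MonRev n v D := by
    rw [← hTrev]
    apply Finset.sum_congr rfl
    intro h hh
    rw [hMon h hh, mul_inv_cancel_left₀ (hwpos h hh).ne']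
  refine ⟨H, w, fun h i => (w h)⁻¹ * T h i, hH, hwpos, hwsum, ?_, hbayes, ?_, hrev, ?_⟩
  · intro h hh
    refine ⟨fun i hi => mul_nonneg (inv_nonneg.2 (hwpos h hh).le) ((hT h hh).1 i hi), ?_⟩
    rw [← Finset.mul_sum]
    exact inv_mul_cancel₀ (hwpos h hh).ne'
  · intro h hh
    obtain ⟨-, i₀, hi₀, hp, hlow, hr⟩ := hT h hh
    refine ⟨i₀, hi₀, mul_pos (inv_pos.2 (hwpos h hh)) hp, fun i hi => by simp [hlow i hi], ?_⟩
    rw [hMon h hh, hr, mul_left_comm]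
    change v i₀ * ((w h)⁻¹ * w h) = v i₀
    rw [inv_mul_cancel₀ (hwpos h hh).ne', mul_one]
  · simp only [mul_sub]
    rw [Finset.sum_sub_distrib, hrev]
    congr 1
    simp only [Finset.mul_sum]
    rw [Finset.sum_comm]
    apply Finset.sum_congr rfl
    intro i hi
    rw [← hbayes i hi, Finset.sum_mul]
    apply Finset.sum_congr rfl
    intro h _
    ring
end

section
/- The function f is a probability mass function on {1,...,n} (f(i) >= 0 for all i and \sum_{i=1}^n f(i) = 1) and is an equal revenue distribution: v_i * \sum_{i'=i}^{n} f(i') = v_1 for every 1 <= i <= n. In particular every value v_i maximizes the posted-price revenue v * (probability that the value is at least v), and the monopoly revenue of f equals v_1. -/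
/-!
The recursion telescopes: the mass on `{1,…,k}` is `1 - v 1 / v (k + 1)` for `k < n`, because
the tail mass left after step `k` is multiplied by `v (k + 1) / v (k + 2)` at the next step. Hence
the tail from `i` on has mass `v 1 / v i`, which is the equal revenue identity, and each `f i` is
a difference of consecutive tails (or the last tail), hence nonnegative as `v` is increasing.
-/

/-- The recursively defined function `f` with `f 1 = 1 - v 1 / v 2`,
`f i = (1 - ∑_{i' < i} f i') * (1 - v i / v (i+1))` for `2 ≤ i ≤ n - 1`, and
`f n = 1 - ∑_{i' < n} f i'` is a probability mass function on `{1,…,n}` and is an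
equal revenue distribution: `v i * ∑_{i' = i}^{n} f i' = v 1` for every `1 ≤ i ≤ n`.
In particular every value `v i` maximizes the posted-price revenue, and the monopoly
revenue of `f` equals `v 1`. -/
theorem stmt1
    (n : ℕ) (hn : 2 ≤ n) (v : ℕ → ℝ)
    (hvpos : 0 < v 1)
    (hvmono : ∀ i, 1 ≤ i → i < n → v i < v (i + 1))
    (f : ℕ → ℝ)
    (hf1 : f 1 = 1 - v 1 / v 2)
    (hfmid : ∀ i, 2 ≤ i → i ≤ n - 1 →
      f i = (1 - ∑ i' ∈ Finset.Icc 1 (i - 1), f i') * (1 - v i / v (i + 1)))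
    (hfn : f n = 1 - ∑ i' ∈ Finset.Icc 1 (n - 1), f i') :
    (∀ i ∈ Finset.Icc 1 n, 0 ≤ f i) ∧
    (∑ i ∈ Finset.Icc 1 n, f i = 1) ∧
    (∀ i ∈ Finset.Icc 1 n, v i * ∑ i' ∈ Finset.Icc i n, f i' = v 1) := by
  have hpos : ∀ k, k < n → 0 < v (k + 1) := by
    intro k
    induction k with
    | zero => intro _; exact hvpos
    | succ k ih => intro h; exact (ih (by omega)).trans (hvmono (k + 1) (by omega) h)
  have hS : ∀ k, k < n → ∑ j ∈ Finset.Icc 1 k, f j = 1 - v 1 / v (k + 1) := by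
    intro k
    induction k with
    | zero => intro _; simp [hvpos.ne']
    | succ k ih =>
      intro h
      rw [Finset.sum_Icc_succ_top (by omega), ih (by omega)]
      rcases Nat.eq_zero_or_pos k with rfl | hk
      · simp [hf1, hvpos.ne']
      · have h1 := hpos k (by omega)
        have h2 := hpos (k + 1) h
        rw [hfmid (k + 1) (by omega) (by omega), Nat.add_sub_cancel, ih (by omega)]
        field_simp
        ring
  obtain ⟨m, rfl⟩ : ∃ m, n = m + 1 := ⟨n - 1, by omega⟩
  rw [Nat.add_sub_cancel] at hfn
  have htot : ∑ i ∈ Finset.Icc 1 (m + 1), f i = 1 := by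
    rw [Finset.sum_Icc_succ_top (by omega), hfn]
    ring
  refine ⟨?_, htot, ?_⟩
  · intro i hi
    obtain ⟨hi1, hin⟩ := Finset.mem_Icc.mp hi
    obtain ⟨k, rfl⟩ : ∃ k, i = k + 1 := ⟨i - 1, by omega⟩
    rcases Nat.lt_or_ge k m with hk | hk
    · have hs := hS (k + 1) (by omega)
      rw [Finset.sum_Icc_succ_top (by omega), hS k (by omega)] at hs
      have hle : v 1 / v (k + 1 + 1) ≤ v 1 / v (k + 1) :=
        div_le_div_of_nonneg_left hvpos.le (hpos k (by omega))
          (hvmono (k + 1) (by omega) (by omega)).le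
      linarith
    · obtain rfl : k = m := by omega
      rw [hfn, hS k (by omega)]
      have := div_pos hvpos (hpos k (by omega))
      linarith
  · intro i hi
    obtain ⟨hi1, hin⟩ := Finset.mem_Icc.mp hi
    obtain ⟨k, rfl⟩ : ∃ k, i = k + 1 := ⟨i - 1, by omega⟩
    have hsplit : ∑ j ∈ Finset.Icc 1 k, f j + ∑ j ∈ Finset.Icc (k + 1) (m + 1), f j
        = ∑ j ∈ Finset.Icc 1 (m + 1), f j := by
      rw [← Finset.sum_union]
      · congr 1
        ext j
        simp only [Finset.mem_union, Finset.mem_Icc]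
        omega
      · rw [Finset.disjoint_left]
        intro j
        simp only [Finset.mem_Icc]
        omega
    rw [htot, hS k (by omega)] at hsplit
    have htail : ∑ j ∈ Finset.Icc (k + 1) (m + 1), f j = v 1 / v (k + 1) := by linarith
    rw [htail]
    exact mul_div_cancel₀ _ (hpos k (by omega)).ne'
end

section
/- Let x : [0,V] -> [0,1] be monotone nondecreasing with V * x(V) - \int_0^V x(w) dw <= b. Define x_hat : [0,V] -> R by x_hat(V) = x(V) and, for each 0 <= i <= m with w_i < V and each v in [w_i, w_{i+1}), x_hat(v) = (\int_{w_i}^{w_{i+1}} x(w) dw) / (w_{i+1} - w_i). Then: x_hat is monotone nondecreasing with values in [0,1]; \int_0^{w_i} x_hat(w) dw = \int_0^{w_i} x(w) dw for every 0 <= i <= m+1; V * x_hat(V) - \int_0^V x_hat(w) dw <= b; and Obj(x_hat) >= Obj(x). -/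
/-!
The curve `xhat` takes on each cell `[w i, w (i+1))` the mean value `A i` of `x` there.  Since `x` is
monotone, `x (w i) ≤ A i ≤ x (w (i+1))` (`mean_mem_Icc`).  Everything follows from this sandwich:

* the means of successive cells are separated by values of `x` at the nodes, so `xhat` is monotone,
  and it inherits the range of `x`;
* on each cell `xhat` and `x` have the same integral, so the areas up to each node agree, and with
  `xhat V = x V` the budget term is unchanged;
* `x (w i) ≤ xhat (w i)` at every node, so each summand of the objective weakly increases.
-/

/-- The mean of a monotone function over an interval lies between its values at the endpoints. -/
lemma mean_mem_Icc {x : ℝ → ℝ} {a c : ℝ} (hac : a < c) (hx : MonotoneOn x (Set.Icc a c)) :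
    (∫ s in a..c, x s) / (c - a) ∈ Set.Icc (x a) (x c) := by
  have hpos : 0 < c - a := sub_pos.2 hac
  have ha : a ∈ Set.Icc a c := ⟨le_rfl, hac.le⟩
  have hc : c ∈ Set.Icc a c := ⟨hac.le, le_rfl⟩
  have hint : IntervalIntegrable x MeasureTheory.volume a c :=
    MonotoneOn.intervalIntegrable (by rwa [Set.uIcc_of_le hac.le])
  have h1 : (∫ _ in a..c, x a) ≤ ∫ s in a..c, x s :=
    intervalIntegral.integral_mono_on hac.le intervalIntegrable_const hint
      fun s hs => hx ha hs hs.1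
  have h2 : (∫ s in a..c, x s) ≤ ∫ _ in a..c, x c :=
    intervalIntegral.integral_mono_on hac.le hint intervalIntegrable_const
      fun s hs => hx hs hc hs.2
  rw [intervalIntegral.integral_const, smul_eq_mul] at h1 h2
  exact ⟨by rw [le_div_iff₀ hpos]; linarith, by rw [div_le_iff₀ hpos]; linarith⟩

/-- Replacing a function by its mean on `[a, c)` leaves its integral over `[a, c]` unchanged. -/
lemma integral_eq_of_eq_mean {x y : ℝ → ℝ} {a c : ℝ} (hac : a < c)
    (hy : ∀ t, a ≤ t → t < c → y t = (∫ s in a..c, x s) / (c - a)) :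
    (∫ t in a..c, y t) = ∫ t in a..c, x t := by
  have h : (∫ t in a..c, y t) = ∫ _ in a..c, (∫ s in a..c, x s) / (c - a) := by
    rw [intervalIntegral.integral_of_le hac.le, intervalIntegral.integral_of_le hac.le,
      MeasureTheory.integral_Ioc_eq_integral_Ioo, MeasureTheory.integral_Ioc_eq_integral_Ioo]
    exact MeasureTheory.setIntegral_congr_fun measurableSet_Ioo fun t ht => hy t ht.1.le ht.2
  rw [h, intervalIntegral.integral_const, smul_eq_mul, mul_div_cancel₀ _ (sub_pos.2 hac).ne']

/-- Flattening a monotone allocation curve `x : [0,V] → [0,1]` into the piecewise-constant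
curve `x̂` which averages `x` on each interval `[w i, w (i+1))` preserves monotonicity,
the range `[0,1]`, the areas `∫_0^{w i} x`, the budget constraint
`V * x(V) - ∫_0^V x ≤ b`, and weakly increases the public-budget objective
`∑ i, f i * (w i * x (w i) - ∫_0^{w i} x)`. -/
theorem stmt5
    (m : ℕ) (w : ℕ → ℝ) (V b : ℝ)
    (hw0 : w 0 = 0)
    (hwmono : ∀ i < m, w i < w (i + 1))
    (hwm : w m ≤ V)
    (hwm1 : w (m + 1) = V)
    (hb : 0 < b)
    (f : ℕ → ℝ)
    (hf0 : ∀ i ∈ Finset.Icc 1 m, 0 ≤ f i)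
    (hf1 : ∑ i ∈ Finset.Icc 1 m, f i = 1)
    (x : ℝ → ℝ)
    (hxmono : MonotoneOn x (Set.Icc 0 V))
    (hxrange : ∀ t ∈ Set.Icc (0 : ℝ) V, x t ∈ Set.Icc (0 : ℝ) 1)
    (hxbudget : V * x V - ∫ t in (0 : ℝ)..V, x t ≤ b)
    (xhat : ℝ → ℝ)
    (hxhatV : xhat V = x V)
    (hxhatdef : ∀ i ≤ m, w i < V → ∀ t, w i ≤ t → t < w (i + 1) →
      xhat t = (∫ s in (w i)..(w (i + 1)), x s) / (w (i + 1) - w i)) :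
    MonotoneOn xhat (Set.Icc 0 V) ∧
    (∀ t ∈ Set.Icc (0 : ℝ) V, xhat t ∈ Set.Icc (0 : ℝ) 1) ∧
    (∀ i ≤ m + 1, (∫ t in (0 : ℝ)..(w i), xhat t) = ∫ t in (0 : ℝ)..(w i), x t) ∧
    (V * xhat V - ∫ t in (0 : ℝ)..V, xhat t ≤ b) ∧
    ((∑ i ∈ Finset.Icc 1 m, f i * (w i * x (w i) - ∫ t in (0 : ℝ)..(w i), x t)) ≤
      ∑ i ∈ Finset.Icc 1 m, f i * (w i * xhat (w i) - ∫ t in (0 : ℝ)..(w i), xhat t)) := by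
  have hstep : ∀ i ≤ m, w i ≤ w (i + 1) := fun i hi => by
    rcases hi.lt_or_eq with h | rfl
    · exact (hwmono i h).le
    · rwa [hwm1]
  have hle : ∀ j ≤ m + 1, ∀ i ≤ j, w i ≤ w j := by
    intro j hj i hij
    induction j, hij using Nat.le_induction with
    | base => exact le_rfl
    | succ k _ ih => exact (ih (by omega)).trans (hstep k (by omega))
  have hmem : ∀ i ≤ m + 1, w i ∈ Set.Icc (0 : ℝ) V := fun i hi =>
    ⟨hw0 ▸ hle i hi 0 (Nat.zero_le _), hwm1 ▸ hle (m + 1) le_rfl i hi⟩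
  have hV0 : (0 : ℝ) ≤ V := (hmem 0 (Nat.zero_le _)).1.trans (hmem 0 (Nat.zero_le _)).2
  have hVmem : V ∈ Set.Icc (0 : ℝ) V := ⟨hV0, le_rfl⟩
  -- Only the last cell can be empty, and it is exactly when `w m = V`.
  have hcell : ∀ i ≤ m, w i < V → w i < w (i + 1) := fun i hi hV => by
    rcases hi.lt_or_eq with h | rfl
    · exact hwmono i h
    · rwa [hwm1]
  have hfind : ∀ t, 0 ≤ t → t < V → ∃ i ≤ m, w i ≤ t ∧ t < w (i + 1) := by
    intro t ht0 htV
    have hex : ∃ n, t < w n := ⟨m + 1, hwm1 ▸ htV⟩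
    classical
    -- The first node beyond `t` is the right endpoint of the cell containing `t`.
    have hlt := Nat.find_spec hex
    have hne : Nat.find hex ≠ 0 := fun h0 => by
      rw [h0, hw0] at hlt
      exact absurd hlt (not_lt.2 ht0)
    have hbd : Nat.find hex ≤ m + 1 := Nat.find_min' hex (hwm1 ▸ htV)
    obtain ⟨k, hk⟩ := Nat.exists_eq_succ_of_ne_zero hne
    exact ⟨k, by omega, not_lt.1 (Nat.find_min hex (by omega)), by rwa [hk] at hlt⟩
  have hsub : ∀ i ≤ m, MonotoneOn x (Set.Icc (w i) (w (i + 1))) := fun i hi =>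
    hxmono.mono (Set.Icc_subset_Icc (hmem i (by omega)).1 (hmem (i + 1) (by omega)).2)
  have hsand : ∀ i ≤ m, ∀ t, w i ≤ t → t < w (i + 1) →
      xhat t ∈ Set.Icc (x (w i)) (x (w (i + 1))) := fun i hi t h1 h2 => by
    rw [hxhatdef i hi (h1.trans_lt (h2.trans_le (hmem (i + 1) (by omega)).2)) t h1 h2]
    exact mean_mem_Icc (h1.trans_lt h2) (hsub i hi)
  have hmono : MonotoneOn xhat (Set.Icc 0 V) := by
    intro s hs t ht hst
    rcases hs.2.lt_or_eq with hsV | rfl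
    · obtain ⟨i, hi, hi1, hi2⟩ := hfind s hs.1 hsV
      rcases ht.2.lt_or_eq with htV | rfl
      · obtain ⟨j, hj, hj1, hj2⟩ := hfind t ht.1 htV
        rcases lt_trichotomy i j with hij | rfl | hij
        · exact ((hsand i hi s hi1 hi2).2.trans
            (hxmono (hmem (i + 1) (by omega)) (hmem j (by omega))
              (hle j (by omega) (i + 1) hij))).trans (hsand j hj t hj1 hj2).1
        · have hiV : w i < V := hi1.trans_lt hsV
          rw [hxhatdef i hi hiV s hi1 hi2, hxhatdef i hi hiV t hj1 hj2]
        · have := hle i (by omega) (j + 1) hij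
          linarith
      · rw [hxhatV]
        exact (hsand i hi s hi1 hi2).2.trans
          (hxmono (hmem (i + 1) (by omega)) hVmem (hmem (i + 1) (by omega)).2)
    · rw [le_antisymm ht.2 hst]
  have hrange : ∀ t ∈ Set.Icc (0 : ℝ) V, xhat t ∈ Set.Icc (0 : ℝ) 1 := by
    intro t ht
    rcases ht.2.lt_or_eq with htV | rfl
    · obtain ⟨i, hi, hi1, hi2⟩ := hfind t ht.1 htV
      have h := hsand i hi t hi1 hi2
      exact ⟨(hxrange _ (hmem i (by omega))).1.trans h.1,
        h.2.trans (hxrange _ (hmem (i + 1) (by omega))).2⟩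
    · rw [hxhatV]
      exact hxrange _ hVmem
  have hintg : ∀ y : ℝ → ℝ, MonotoneOn y (Set.Icc 0 V) → ∀ i ≤ m + 1, ∀ j ≤ m + 1,
      IntervalIntegrable y MeasureTheory.volume (w i) (w j) := fun y hy i hi j hj =>
    MonotoneOn.intervalIntegrable (hy.mono (Set.uIcc_subset_Icc (hmem i hi) (hmem j hj)))
  have harea : ∀ i ≤ m + 1, (∫ t in (0 : ℝ)..(w i), xhat t) = ∫ t in (0 : ℝ)..(w i), x t := by
    intro i
    rw [← hw0]
    induction i with
    | zero => intro _; simp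
    | succ k ih =>
      intro hk
      have hkm : k ≤ m := by omega
      rw [← intervalIntegral.integral_add_adjacent_intervals
          (hintg xhat hmono 0 (by omega) k (by omega)) (hintg xhat hmono k (by omega) (k + 1) hk),
        ← intervalIntegral.integral_add_adjacent_intervals
          (hintg x hxmono 0 (by omega) k (by omega)) (hintg x hxmono k (by omega) (k + 1) hk),
        ih (by omega)]
      congr 1
      rcases (hstep k hkm).lt_or_eq with hlt | heq
      · exact integral_eq_of_eq_mean hlt
          (hxhatdef k hkm (hlt.trans_le (hmem (k + 1) hk).2))
      · rw [← heq, intervalIntegral.integral_same, intervalIntegral.integral_same]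
  refine ⟨hmono, hrange, harea, ?_, ?_⟩
  · have h := harea (m + 1) le_rfl
    rw [hwm1] at h
    rwa [h, hxhatV]
  · refine Finset.sum_le_sum fun i hi => mul_le_mul_of_nonneg_left ?_ (hf0 i hi)
    have him : i ≤ m := (Finset.mem_Icc.1 hi).2
    have hwi := hmem i (by omega)
    rw [harea i (by omega)]
    have hnode : x (w i) ≤ xhat (w i) := by
      rcases hwi.2.lt_or_eq with hlt | heq
      · exact (hsand i him (w i) le_rfl (hcell i him hlt)).1
      · rw [heq, hxhatV]
    exact sub_le_sub_right (mul_le_mul_of_nonneg_left hnode hwi.1) _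
end

section
/- Assume w_1 < b. Then there exists a feasible vector x_hat with x_hat_0 = 0 and x_hat_m = 1 such that Obj(x_hat) >= Obj(x) for every feasible x; that is, the finite public-budget program has an optimal solution in which the buyer with the highest value w_m receives the item with probability 1 and a buyer with value 0 receives it with probability 0. -/
/-!
Write `p i = w i * x i - Area_x(w i)`; then `p (i+1) - p i = w (i+1) * (x (i+1) - x i)`, so `p` is
nondecreasing on `{0, ..., m}`, `p m` is the budget use `C`, and the objective `R` is an average
of the `p i`, whence `R ≤ C`.

Every feasible `x` is dominated by a feasible `x'` with `x' 0 = 0` and `x' m = 1`: for `t ∈ [0, 1]`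
scale all increments of `x` by `t` and put the missing mass `1 - t * (x m - x 0)` on the jump at
`w 1`. This turns each `p i` with `1 ≤ i ≤ m` into `t * p i + K`, where
`K = w 1 * (1 - t * (x m - x 0)) ≥ 0`, so budget use and objective become `t * C + K` and
`t * R + K`. If `t = 1` respects the budget, the objective has not decreased. Otherwise, as
`w 1 < b`, some `t ∈ [0, 1]` makes the budget use exactly `b`, and the objective is
`b - t * (C - R) ≥ C - (C - R) = R`.

The feasible vectors with `x 0 = 0` and `x m = 1` (entries in `[0, 1]`) form a nonempty compact set,
so the continuous objective attains its maximum there; by domination this is a global maximum.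
-/

/-- `Area_x(w i) = ∑_{i' = 0}^{i-1} (w (i'+1) - w i') * x i'`. -/
def AreaP (w : ℕ → ℝ) (x : ℕ → ℝ) (i : ℕ) : ℝ :=
  ∑ i' ∈ Finset.range i, (w (i' + 1) - w i') * x i'

/-- Feasibility for the finite public-budget program:
`0 ≤ x 0 ≤ x 1 ≤ ⋯ ≤ x m ≤ 1` and `w m * x m - Area_x(w m) ≤ b`. -/
def FeasP (m : ℕ) (w : ℕ → ℝ) (b : ℝ) (x : ℕ → ℝ) : Prop :=
  0 ≤ x 0 ∧ (∀ i < m, x i ≤ x (i + 1)) ∧ x m ≤ 1 ∧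
  w m * x m - AreaP w x m ≤ b

/-- The public-budget objective `Obj(x) = ∑ i, f i * (w i * x i - Area_x(w i))`. -/
def ObjP (m : ℕ) (w : ℕ → ℝ) (f : ℕ → ℝ) (x : ℕ → ℝ) : ℝ :=
  ∑ i ∈ Finset.Icc 1 m, f i * (w i * x i - AreaP w x i)

/-- The payment of the buyer with value `w i`. -/
def payP (w x : ℕ → ℝ) (i : ℕ) : ℝ := w i * x i - AreaP w x i

lemma payP_succ (w x : ℕ → ℝ) (i : ℕ) :
    payP w x (i + 1) = payP w x i + w (i + 1) * (x (i + 1) - x i) := by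
  simp only [payP, AreaP, Finset.sum_range_succ]
  ring

lemma w_nonneg {m : ℕ} {w : ℕ → ℝ} (hw0 : w 0 = 0) (hwmono : ∀ i < m, w i < w (i + 1)) :
    ∀ i ≤ m, 0 ≤ w i := by
  intro i
  induction i with
  | zero => intro _; exact hw0.ge
  | succ k ih =>
    intro hk
    exact (ih (by omega)).trans (hwmono k (by omega)).le

lemma le_last {m : ℕ} {g : ℕ → ℝ} (hg : ∀ i < m, g i ≤ g (i + 1)) {i : ℕ} (hi : i ≤ m) :
    g i ≤ g m := by
  induction m, hi using Nat.le_induction with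
  | base => exact le_rfl
  | succ n hn ih => exact (ih fun j hj => hg j (by omega)).trans (hg n (by omega))

/-- Increments of `x` scaled by `t`, the missing mass being put on the jump from index `0` to
index `1`. Entries beyond `m` play no role and are set to `1`, so that all entries lie in
`[0, 1]`. -/
def fillP (m : ℕ) (t : ℝ) (x : ℕ → ℝ) (i : ℕ) : ℝ :=
  if i = 0 then 0 else if i ≤ m then t * (x i - x m) + 1 else 1

lemma payP_fillP {m : ℕ} {w : ℕ → ℝ} (hw0 : w 0 = 0) (t : ℝ) (x : ℕ → ℝ) {i : ℕ}
    (h1 : 1 ≤ i) (hi : i ≤ m) :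
    payP w (fillP m t x) i = t * payP w x i + w 1 * (1 - t * (x m - x 0)) := by
  induction i, h1 using Nat.le_induction with
  | base =>
    simp [payP, AreaP, fillP, hi, hw0]
    ring
  | succ n hn ih =>
    have hn0 : n ≠ 0 := by omega
    have hnm : n ≤ m := by omega
    rw [payP_succ, ih hnm, payP_succ]
    simp [fillP, hn0, hnm, hi]
    ring

/-- The compact set on which the maximum is sought. -/
def normP (m : ℕ) (w : ℕ → ℝ) (b : ℝ) : Set (ℕ → ℝ) :=
  {x | FeasP m w b x ∧ x 0 = 0 ∧ x m = 1 ∧ ∀ i, x i ∈ Set.Icc (0 : ℝ) 1}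

lemma fillP_mem {m : ℕ} (hm : 1 ≤ m) {w : ℕ → ℝ} {b t : ℝ} {x : ℕ → ℝ} (hw0 : w 0 = 0)
    (hx : FeasP m w b x) (ht0 : 0 ≤ t) (ht1 : t ≤ 1)
    (hbud : t * payP w x m + w 1 * (1 - t * (x m - x 0)) ≤ b) :
    fillP m t x ∈ normP m w b := by
  obtain ⟨h0, hmono, h1, -⟩ := hx
  have hm0 : m ≠ 0 := by omega
  have hlow : ∀ i ≤ m, 0 ≤ x i := by
    intro i hi
    exact h0.trans (le_last (m := i) (fun j hj => hmono j (by omega)) (Nat.zero_le i))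
  have hIcc : ∀ i, fillP m t x i ∈ Set.Icc (0 : ℝ) 1 := by
    intro i
    unfold fillP
    split_ifs with h h'
    · simp
    · have a := hlow i h'
      have c := le_last hmono h'
      constructor <;> nlinarith
    · simp
  have hz : fillP m t x 0 = 0 := by simp [fillP]
  have hl : fillP m t x m = 1 := by simp [fillP, hm0]
  refine ⟨⟨hz.ge, ?_, hl.le, ?_⟩, hz, hl, hIcc⟩
  · intro i hi
    rcases Nat.eq_zero_or_pos i with rfl | hpos
    · rw [hz]
      exact (hIcc _).1
    · have hi0 : i ≠ 0 := by omega
      have hi1 : i + 1 ≤ m := hi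
      simp only [fillP, hi0, hi.le, hi1, if_true, if_false, Nat.succ_ne_zero]
      have := mul_le_mul_of_nonneg_left (hmono i hi) ht0
      linarith
  · have := payP_fillP hw0 t x hm (le_refl m)
    unfold payP at this hbud
    linarith

lemma exists_normP_ge {m : ℕ} (hm : 1 ≤ m) {w : ℕ → ℝ} {b : ℝ} {f : ℕ → ℝ} (hw0 : w 0 = 0)
    (hwmono : ∀ i < m, w i < w (i + 1)) (hf0 : ∀ i ∈ Finset.Icc 1 m, 0 ≤ f i)
    (hf1 : ∑ i ∈ Finset.Icc 1 m, f i = 1) (hw1b : w 1 < b) {x : ℕ → ℝ} (hx : FeasP m w b x) :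
    ∃ y ∈ normP m w b, ObjP m w f x ≤ ObjP m w f y := by
  have hobj : ∀ t, ObjP m w f (fillP m t x)
      = t * ObjP m w f x + w 1 * (1 - t * (x m - x 0)) := by
    intro t
    calc ObjP m w f (fillP m t x)
        = ∑ i ∈ Finset.Icc 1 m,
            (t * (f i * payP w x i) + f i * (w 1 * (1 - t * (x m - x 0)))) := by
          refine Finset.sum_congr rfl fun i hi => ?_
          rw [Finset.mem_Icc] at hi
          have := payP_fillP hw0 t x hi.1 hi.2
          rw [← payP, this]
          ring
      _ = _ := by
          rw [Finset.sum_add_distrib, ← Finset.mul_sum, ← Finset.sum_mul, hf1, one_mul]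
          rfl
  have hw := w_nonneg hw0 hwmono
  have hw1 := hw 1 hm
  have hRC : ObjP m w f x ≤ payP w x m := by
    have hpay : ∀ i < m, payP w x i ≤ payP w x (i + 1) := by
      intro i hi
      rw [payP_succ]
      have := mul_nonneg (hw (i + 1) hi) (sub_nonneg.2 (hx.2.1 i hi))
      linarith
    calc ObjP m w f x ≤ ∑ i ∈ Finset.Icc 1 m, f i * payP w x m := by
          refine Finset.sum_le_sum fun i hi => mul_le_mul_of_nonneg_left ?_ (hf0 i hi)
          exact le_last hpay (Finset.mem_Icc.1 hi).2
      _ = payP w x m := by rw [← Finset.sum_mul, hf1, one_mul]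
  have hCb : payP w x m ≤ b := hx.2.2.2
  have hD : x m - x 0 ≤ 1 := by linarith [hx.1, hx.2.2.1]
  by_cases hc : payP w x m + w 1 * (1 - (x m - x 0)) ≤ b
  · refine ⟨fillP m 1 x, fillP_mem hm hw0 hx zero_le_one le_rfl (by linarith), ?_⟩
    rw [hobj]
    have := mul_nonneg hw1 (sub_nonneg.2 hD)
    linarith
  · push Not at hc
    have hden : 0 < payP w x m - w 1 * (x m - x 0) := by linarith
    -- The budget use `t * C + w 1 * (1 - t * D)` is affine in `t`; solve for the value `b`.
    obtain ⟨t, ht⟩ : ∃ t, t = (b - w 1) / (payP w x m - w 1 * (x m - x 0)) := ⟨_, rfl⟩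
    have ht0 : 0 ≤ t := ht ▸ div_nonneg (by linarith) hden.le
    have ht1 : t ≤ 1 := by rw [ht, div_le_one hden]; linarith
    have hmul : t * (payP w x m - w 1 * (x m - x 0)) = b - w 1 := by
      rw [ht, div_mul_cancel₀ _ hden.ne']
    refine ⟨fillP m t x, fillP_mem hm hw0 hx ht0 ht1 (by linarith), ?_⟩
    rw [hobj]
    have := mul_le_mul_of_nonneg_right ht1 (sub_nonneg.2 hRC)
    linarith

lemma continuous_AreaP (w : ℕ → ℝ) (i : ℕ) : Continuous fun x => AreaP w x i := by
  unfold AreaP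
  fun_prop

lemma continuous_ObjP (m : ℕ) (w f : ℕ → ℝ) : Continuous fun x => ObjP m w f x := by
  unfold ObjP AreaP
  fun_prop

lemma isCompact_normP (m : ℕ) (w : ℕ → ℝ) (b : ℝ) : IsCompact (normP m w b) := by
  have hK : IsCompact (Set.univ.pi fun _ : ℕ => Set.Icc (0 : ℝ) 1) :=
    isCompact_univ_pi fun _ => isCompact_Icc
  have hA := continuous_AreaP w m
  refine hK.of_isClosed_subset ?_ fun x hx i _ => hx.2.2.2 i
  simp only [normP, FeasP, Set.mem_Icc, Set.ofPred_and, Set.ofPred_forall]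
  refine ((isClosed_le (by fun_prop) (by fun_prop)).inter
    ((isClosed_iInter fun i => isClosed_iInter fun _ => isClosed_le (by fun_prop)
      (by fun_prop)).inter ((isClosed_le (by fun_prop) (by fun_prop)).inter
      (isClosed_le (by fun_prop) (by fun_prop))))).inter
    ((isClosed_eq (by fun_prop) (by fun_prop)).inter
    ((isClosed_eq (by fun_prop) (by fun_prop)).inter
    (isClosed_iInter fun i => (isClosed_le (by fun_prop) (by fun_prop)).inter
      (isClosed_le (by fun_prop) (by fun_prop)))))

/-- If `w 1 < b`, the finite public-budget program has an optimal solution in which the buyer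
with the highest value `w m` receives the item with probability `1` and a buyer with value `0`
receives it with probability `0`. -/
theorem stmt6
    (m : ℕ) (hm : 1 ≤ m) (w : ℕ → ℝ) (b : ℝ)
    (hw0 : w 0 = 0)
    (hwmono : ∀ i < m, w i < w (i + 1))
    (hb : 0 < b)
    (f : ℕ → ℝ)
    (hf0 : ∀ i ∈ Finset.Icc 1 m, 0 ≤ f i)
    (hf1 : ∑ i ∈ Finset.Icc 1 m, f i = 1)
    (hw1b : w 1 < b) :
    ∃ xhat : ℕ → ℝ, FeasP m w b xhat ∧ xhat 0 = 0 ∧ xhat m = 1 ∧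
      ∀ x : ℕ → ℝ, FeasP m w b x → ObjP m w f x ≤ ObjP m w f xhat := by
  have hzero : FeasP m w b fun _ => 0 := by simp [FeasP, AreaP, hb.le]
  obtain ⟨y, hy, -⟩ := exists_normP_ge hm hw0 hwmono hf0 hf1 hw1b hzero
  obtain ⟨z, hz, hmax⟩ :=
    (isCompact_normP m w b).exists_isMaxOn ⟨y, hy⟩ (continuous_ObjP m w f).continuousOn
  refine ⟨z, hz.1, hz.2.1, hz.2.2.1, fun x hx => ?_⟩
  obtain ⟨x', hx', hle⟩ := exists_normP_ge hm hw0 hwmono hf0 hf1 hw1b hx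
  exact hle.trans (hmax hx')
end

section
/- If x_0 = 0, then \sum_{i=1}^m f(i) * p_i = \sum_{i'=1}^m (x_{i'} - x_{i'-1}) * w_{i'} * Fbar(w_{i'}). In particular, if in addition x is nondecreasing and x_m = 1, the revenue \sum_i f(i) p_i is a convex combination, with weights x_{i'} - x_{i'-1}, of the posted-price revenues w_{i'} * Fbar(w_{i'}). -/
/-- Summation by parts: the price is the value-weighted sum of the jumps of the allocation. -/
theorem price_eq_sum_jumps (w x : ℕ → ℝ) (hx0 : x 0 = 0) (i : ℕ) :
    w i * x i - AreaP w x i = ∑ j ∈ Finset.Icc 1 i, (x j - x (j - 1)) * w j := by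
  induction i with
  | zero => simp [AreaP, hx0]
  | succ k ih =>
    rw [Finset.sum_Icc_succ_top (by omega), ← ih]
    simp only [AreaP, Finset.sum_range_succ, Nat.add_sub_cancel]
    ring

theorem sum_jumps (x : ℕ → ℝ) (m : ℕ) :
    ∑ j ∈ Finset.Icc 1 m, (x j - x (j - 1)) = x m - x 0 := by
  induction m with
  | zero => simp
  | succ k ih =>
    rw [Finset.sum_Icc_succ_top (by omega), ih, Nat.add_sub_cancel]
    ring

/-- If `x 0 = 0`, then the revenue `∑ i, f i * p i` with prices
`p i = w i * x i - Area_x(w i)` equals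
`∑ i', (x i' - x (i'-1)) * w i' * F̄(w i')` where `F̄(w i) = ∑_{i' = i}^{m} f i'`.
In particular, if in addition `x` is nondecreasing and `x m = 1`, the revenue is a convex
combination, with weights `x i' - x (i'-1)`, of the posted-price revenues `w i' * F̄(w i')`. -/
theorem stmt8
    (m : ℕ) (w : ℕ → ℝ)
    (hw0 : w 0 = 0)
    (hwmono : ∀ i < m, w i < w (i + 1))
    (f : ℕ → ℝ)
    (hf0 : ∀ i ∈ Finset.Icc 1 m, 0 ≤ f i)
    (x : ℕ → ℝ)
    (hx0 : x 0 = 0) :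
    (∑ i ∈ Finset.Icc 1 m, f i * (w i * x i - AreaP w x i)
      = ∑ i' ∈ Finset.Icc 1 m,
          (x i' - x (i' - 1)) * (w i' * ∑ j ∈ Finset.Icc i' m, f j)) ∧
    ((∀ i < m, x i ≤ x (i + 1)) → x m = 1 →
      (∀ i' ∈ Finset.Icc 1 m, 0 ≤ x i' - x (i' - 1)) ∧
      ∑ i' ∈ Finset.Icc 1 m, (x i' - x (i' - 1)) = 1) := by
  refine ⟨?_, fun hmono hxm => ⟨fun i hi => ?_, ?_⟩⟩
  · simp_rw [price_eq_sum_jumps w x hx0, Finset.mul_sum]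
    rw [Finset.sum_comm' (t' := Finset.Icc 1 m) (s' := fun j => Finset.Icc j m)
      (by intro i j; simp only [Finset.mem_Icc]; omega)]
    exact Finset.sum_congr rfl fun j _ => Finset.sum_congr rfl fun i _ => by ring
  · obtain ⟨h1, h2⟩ := Finset.mem_Icc.mp hi
    have h := hmono (i - 1) (by omega)
    rw [Nat.sub_add_cancel h1] at h
    exact sub_nonneg.mpr h
  · rw [sum_jumps, hxm, hx0, sub_zero]
end

section
/- Let x_1, ..., x_k : [0,V] -> [0,1] be monotone nondecreasing functions satisfying the inter-deadline IC constraints \int_0^v x_j(w) dw >= \int_0^v x_{j-1}(w) dw for every v in [0,V] and every 2 <= j <= k. Define x_hat_j by x_hat_j(V) = x_j(V) and x_hat_j(v) = (\int_{w_i}^{w_{i+1}} x_j(w) dw) / (w_{i+1} - w_i) for v in [w_i, w_{i+1}) and 0 <= i <= m with w_i < V. Then: each x_hat_j is monotone nondecreasing with values in [0,1]; \int_0^{w_i} x_hat_j(w) dw = \int_0^{w_i} x_j(w) dw for all 0 <= i <= m+1 and all j; the functions x_hat_1, ..., x_hat_k satisfy the inter-deadline IC constraints \int_0^v x_hat_j(w)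 dw >= \int_0^v x_hat_{j-1}(w) dw for every v in [0,V] and 2 <= j <= k; and Obj(x_hat) >= Obj(x). -/
/-!
On a nondegenerate cell `[w i, w (i+1))` the flattened curve is the mean of a monotone curve, so it
lies between the values of that curve at the two endpoints of the cell (`flat_between`). Chaining
these bounds across cells gives monotonicity of the flattened curve, and at `t = w i` the lower
bound says that flattening can only increase the value at a grid point. Replacing a function by its
mean on each cell keeps its primitive unchanged at the grid points (`flat_integral_grid`), so the
area terms of the objective do not change and the objective can only grow. Between two grid points
the primitive of the flattened curve interpolates linearly (`flat_integral_cell`), that is, it is a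
convex combination of its values at those points; hence an inequality between two primitives on the
grid extends to all of `[0, V]`.
-/

/-- `0 = w 0 ≤ w 1 ≤ ⋯ ≤ w (m+1) = V`; cells may be degenerate. -/
structure IsGrid (w : ℕ → ℝ) (m : ℕ) (V : ℝ) : Prop where
  zero : w 0 = 0
  step : ∀ i ≤ m, w i ≤ w (i + 1)
  last : w (m + 1) = V

/-- `g` is the flattening of `f` along `w`: it agrees with `f` at `V` and is constantly equal to the
mean of `f` on each nonempty half-open cell. -/
structure IsFlattening (w : ℕ → ℝ) (m : ℕ) (V : ℝ) (f g : ℝ → ℝ) : Prop where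
  last : g V = f V
  cell : ∀ i ≤ m, ∀ t, w i ≤ t → t < w (i + 1) →
    g t = (∫ s in (w i)..(w (i + 1)), f s) / (w (i + 1) - w i)

namespace IsGrid

variable {w : ℕ → ℝ} {m : ℕ} {V : ℝ}

lemma mono (h : IsGrid w m V) {i j : ℕ} (hij : i ≤ j) (hj : j ≤ m + 1) : w i ≤ w j := by
  induction j, hij using Nat.le_induction with
  | base => exact le_rfl
  | succ n _ ih => exact (ih (by omega)).trans (h.step n (by omega))

lemma mem_Icc (h : IsGrid w m V) {i : ℕ} (hi : i ≤ m + 1) : w i ∈ Set.Icc 0 V := by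
  constructor
  · simpa [h.zero] using h.mono (Nat.zero_le i) hi
  · simpa [h.last] using h.mono hi le_rfl

lemma exists_cell (h : IsGrid w m V) {t : ℝ} (h0 : 0 ≤ t) (ht : t < V) :
    ∃ i ≤ m, w i ≤ t ∧ t < w (i + 1) := by
  classical
  have hex : ∃ n, t < w n := ⟨m + 1, by rw [h.last]; exact ht⟩
  have hs := Nat.find_spec hex
  have hle : Nat.find hex ≤ m + 1 := Nat.find_min' hex (by rw [h.last]; exact ht)
  have hne : Nat.find hex ≠ 0 := by
    intro h'
    rw [h', h.zero] at hs
    linarith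
  obtain ⟨n, hn⟩ := Nat.exists_eq_succ_of_ne_zero hne
  refine ⟨n, by omega, ?_, by rw [hn] at hs; exact hs⟩
  exact not_lt.1 (Nat.find_min hex (by omega))

end IsGrid

lemma mean_between {f : ℝ → ℝ} {a b : ℝ} (hab : a < b) (hf : MonotoneOn f (Set.Icc a b)) :
    f a ≤ (∫ s in a..b, f s) / (b - a) ∧ (∫ s in a..b, f s) / (b - a) ≤ f b := by
  have hpos : 0 < b - a := sub_pos.2 hab
  have hint : IntervalIntegrable f MeasureTheory.volume a b :=
    MonotoneOn.intervalIntegrable (by rwa [Set.uIcc_of_le hab.le])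
  have ha : a ∈ Set.Icc a b := ⟨le_rfl, hab.le⟩
  have hb : b ∈ Set.Icc a b := ⟨hab.le, le_rfl⟩
  constructor
  · rw [le_div_iff₀ hpos]
    have := intervalIntegral.integral_mono_on hab.le (intervalIntegrable_const (c := f a)) hint
      (fun s hs => hf ha hs hs.1)
    rw [intervalIntegral.integral_const, smul_eq_mul] at this
    linarith
  · rw [div_le_iff₀ hpos]
    have := intervalIntegral.integral_mono_on hab.le hint (intervalIntegrable_const (c := f b))
      (fun s hs => hf hs hb hs.2)
    rw [intervalIntegral.integral_const, smul_eq_mul] at this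
    linarith

section Flat

variable {w : ℕ → ℝ} {m : ℕ} {V : ℝ} {f g : ℝ → ℝ}

lemma flat_between (h : IsGrid w m V) (hf : MonotoneOn f (Set.Icc 0 V))
    (hg : IsFlattening w m V f g) {i : ℕ} (hi : i ≤ m) {t : ℝ} (h1 : w i ≤ t)
    (h2 : t < w (i + 1)) : f (w i) ≤ g t ∧ g t ≤ f (w (i + 1)) := by
  rw [hg.cell i hi t h1 h2]
  exact mean_between (h1.trans_lt h2) (hf.mono (Set.Icc_subset_Icc
    (h.mem_Icc (by omega)).1 (h.mem_Icc (by omega)).2))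

lemma flat_monotoneOn (h : IsGrid w m V) (hf : MonotoneOn f (Set.Icc 0 V))
    (hg : IsFlattening w m V f g) : MonotoneOn g (Set.Icc 0 V) := by
  intro s hs t ht hst
  rcases hs.2.eq_or_lt with hsV | hsV
  · rw [le_antisymm hst (hsV ▸ ht.2)]
  obtain ⟨i, hi, hi1, hi2⟩ := h.exists_cell hs.1 hsV
  have hsb := (flat_between h hf hg hi hi1 hi2).2
  rcases ht.2.eq_or_lt with htV | htV
  · rw [htV, hg.last]
    have hw := h.mem_Icc (i := i + 1) (by omega)
    exact hsb.trans (hf hw ⟨hs.1.trans hs.2, le_rfl⟩ hw.2)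
  obtain ⟨j, hj, hj1, hj2⟩ := h.exists_cell ht.1 htV
  rcases lt_trichotomy i j with hij | hij | hij
  · refine hsb.trans (le_trans ?_ (flat_between h hf hg hj hj1 hj2).1)
    exact hf (h.mem_Icc (by omega)) (h.mem_Icc (by omega)) (h.mono hij (by omega))
  · subst hij
    rw [hg.cell i hi s hi1 hi2, hg.cell i hi t hj1 hj2]
  · have := h.mono (i := j + 1) (j := i) hij (by omega)
    linarith

lemma flat_ge_grid (h : IsGrid w m V) (hf : MonotoneOn f (Set.Icc 0 V))
    (hg : IsFlattening w m V f g) {i : ℕ} (hi : i ≤ m + 1) : f (w i) ≤ g (w i) := by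
  have hw := h.mem_Icc hi
  rcases hw.2.eq_or_lt with hV | hV
  · rw [hV, hg.last]
  -- With repeated grid points, the cell containing `w i` need not have index `i`.
  obtain ⟨j, hj, hj1, hj2⟩ := h.exists_cell hw.1 hV
  have hij : i ≤ j := by
    by_contra hc
    have := h.mono (i := j + 1) (j := i) (by omega) hi
    linarith
  have := (flat_between h hf hg hj hj1 hj2).1
  rwa [← le_antisymm (h.mono hij (by omega)) hj1] at this

lemma flat_mem_Icc (h : IsGrid w m V) (hf : MonotoneOn f (Set.Icc 0 V))
    (hr : ∀ t ∈ Set.Icc (0 : ℝ) V, f t ∈ Set.Icc (0 : ℝ) 1)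
    (hg : IsFlattening w m V f g) : ∀ t ∈ Set.Icc (0 : ℝ) V, g t ∈ Set.Icc (0 : ℝ) 1 := by
  intro t ht
  rcases ht.2.eq_or_lt with hV | hV
  · rw [hV, hg.last]
    exact hr V ⟨ht.1.trans ht.2, le_rfl⟩
  obtain ⟨i, hi, h1, h2⟩ := h.exists_cell ht.1 hV
  have hb := flat_between h hf hg hi h1 h2
  exact ⟨(hr _ (h.mem_Icc (by omega))).1.trans hb.1, hb.2.trans (hr _ (h.mem_Icc (by omega))).2⟩

lemma intervalIntegrable_of_monotoneOn {f : ℝ → ℝ} (hf : MonotoneOn f (Set.Icc 0 V)) {a b : ℝ}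
    (ha : a ∈ Set.Icc 0 V) (hb : b ∈ Set.Icc 0 V) :
    IntervalIntegrable f MeasureTheory.volume a b :=
  MonotoneOn.intervalIntegrable (hf.mono (Set.uIcc_subset_Icc ha hb))

/-- The primitive of the flattening is affine on a cell, with slope the mean of `f`. Both sides
vanish on a degenerate cell, where the mean is the junk value `0 / 0 = 0`. -/
lemma integral_flat_cell (hg : IsFlattening w m V f g) {i : ℕ} (hi : i ≤ m) {t : ℝ}
    (h1 : w i ≤ t) (h2 : t ≤ w (i + 1)) :
    ∫ s in (w i)..t, g s =
      (t - w i) * ((∫ s in (w i)..(w (i + 1)), f s) / (w (i + 1) - w i)) := by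
  have : ∫ s in (w i)..t, g s =
      ∫ _ in (w i)..t, (∫ s in (w i)..(w (i + 1)), f s) / (w (i + 1) - w i) := by
    -- The right endpoint is null, so the half-open description of `g` suffices.
    rw [intervalIntegral.integral_of_le h1, intervalIntegral.integral_of_le h1,
      MeasureTheory.integral_Ioc_eq_integral_Ioo, MeasureTheory.integral_Ioc_eq_integral_Ioo]
    exact MeasureTheory.setIntegral_congr_fun measurableSet_Ioo
      fun s hs => hg.cell i hi s hs.1.le (hs.2.trans_le h2)
  rw [this, intervalIntegral.integral_const, smul_eq_mul]

lemma flat_integral_grid (h : IsGrid w m V) (hf : MonotoneOn f (Set.Icc 0 V))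
    (hg : IsFlattening w m V f g) {i : ℕ} (hi : i ≤ m + 1) :
    ∫ s in (0 : ℝ)..(w i), g s = ∫ s in (0 : ℝ)..(w i), f s := by
  have hgm := flat_monotoneOn h hf hg
  induction i with
  | zero => simp [h.zero]
  | succ n ih =>
    have h0 : (0 : ℝ) ∈ Set.Icc 0 V := h.zero ▸ h.mem_Icc (Nat.zero_le _)
    have ha := h.mem_Icc (i := n) (by omega)
    have hb := h.mem_Icc hi
    rw [← intervalIntegral.integral_add_adjacent_intervals
        (intervalIntegrable_of_monotoneOn hgm h0 ha) (intervalIntegrable_of_monotoneOn hgm ha hb),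
      ← intervalIntegral.integral_add_adjacent_intervals
        (intervalIntegrable_of_monotoneOn hf h0 ha) (intervalIntegrable_of_monotoneOn hf ha hb),
      ih (by omega), integral_flat_cell hg (by omega) (h.step n (by omega)) le_rfl]
    rcases (h.step n (by omega)).eq_or_lt with he | hl
    · simp [he]
    · rw [mul_div_cancel₀ _ (sub_pos.2 hl).ne']

lemma flat_integral_cell (h : IsGrid w m V) (hf : MonotoneOn f (Set.Icc 0 V))
    (hg : IsFlattening w m V f g) {i : ℕ} (hi : i ≤ m) {t : ℝ}
    (h1 : w i ≤ t) (h2 : t < w (i + 1)) :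
    ∫ s in (0 : ℝ)..t, g s =
      (1 - (t - w i) / (w (i + 1) - w i)) * (∫ s in (0 : ℝ)..(w i), f s) +
        (t - w i) / (w (i + 1) - w i) * ∫ s in (0 : ℝ)..(w (i + 1)), f s := by
  have hgm := flat_monotoneOn h hf hg
  have h0 : (0 : ℝ) ∈ Set.Icc 0 V := h.zero ▸ h.mem_Icc (Nat.zero_le _)
  have ha := h.mem_Icc (i := i) (by omega)
  have hb := h.mem_Icc (i := i + 1) (by omega)
  have ht : t ∈ Set.Icc 0 V := ⟨ha.1.trans h1, h2.le.trans hb.2⟩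
  rw [← intervalIntegral.integral_add_adjacent_intervals
      (intervalIntegrable_of_monotoneOn hgm h0 ha) (intervalIntegrable_of_monotoneOn hgm ha ht),
    flat_integral_grid h hf hg (by omega), integral_flat_cell hg hi h1 h2.le,
    ← intervalIntegral.integral_add_adjacent_intervals
      (intervalIntegrable_of_monotoneOn hf h0 ha) (intervalIntegrable_of_monotoneOn hf ha hb)]
  ring

lemma flat_integral_le (h : IsGrid w m V) {f' g' : ℝ → ℝ} (hf : MonotoneOn f (Set.Icc 0 V))
    (hf' : MonotoneOn f' (Set.Icc 0 V)) (hg : IsFlattening w m V f g)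
    (hg' : IsFlattening w m V f' g')
    (hle : ∀ t ∈ Set.Icc (0 : ℝ) V, (∫ s in (0 : ℝ)..t, f s) ≤ ∫ s in (0 : ℝ)..t, f' s) :
    ∀ t ∈ Set.Icc (0 : ℝ) V, (∫ s in (0 : ℝ)..t, g s) ≤ ∫ s in (0 : ℝ)..t, g' s := by
  intro t ht
  rcases ht.2.eq_or_lt with hV | hV
  · have e := flat_integral_grid h hf hg (i := m + 1) le_rfl
    have e' := flat_integral_grid h hf' hg' (i := m + 1) le_rfl
    rw [h.last, ← hV] at e e'
    rw [e, e']
    exact hle t ht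
  obtain ⟨i, hi, h1, h2⟩ := h.exists_cell ht.1 hV
  rw [flat_integral_cell h hf hg hi h1 h2, flat_integral_cell h hf' hg' hi h1 h2]
  have hpos : 0 < w (i + 1) - w i := by linarith
  have hr1 : (t - w i) / (w (i + 1) - w i) ≤ 1 := (div_le_one hpos).2 (by linarith)
  have hr0 : 0 ≤ (t - w i) / (w (i + 1) - w i) := div_nonneg (by linarith) hpos.le
  exact add_le_add
    (mul_le_mul_of_nonneg_left (hle _ (h.mem_Icc (by omega))) (sub_nonneg.2 hr1))
    (mul_le_mul_of_nonneg_left (hle _ (h.mem_Icc (by omega))) hr0)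

end Flat


/-- Flattening monotone allocation curves `x 1, …, x k : [0,V] → [0,1]` satisfying the
inter-deadline IC constraints into the piecewise-constant curves `x̂ j` which average `x j` on
each interval `[w i, w (i+1))` preserves monotonicity, the range `[0,1]`, the areas
`∫_0^{w i} x j`, the inter-deadline IC constraints, and weakly increases the deadlines
objective `∑ i j, μ i j * (w i * x j (w i) - ∫_0^{w i} x j)`. -/
theorem stmt9
    (m k : ℕ) (hk : 1 ≤ k) (w : ℕ → ℝ) (V : ℝ)
    (hw0 : w 0 = 0)
    (hwmono : ∀ i < m, w i < w (i + 1))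
    (hwm : w m ≤ V)
    (hwm1 : w (m + 1) = V)
    (mu : ℕ → ℕ → ℝ)
    (hmu0 : ∀ i ∈ Finset.Icc 1 m, ∀ j ∈ Finset.Icc 1 k, 0 ≤ mu i j)
    (hmu1 : ∑ i ∈ Finset.Icc 1 m, ∑ j ∈ Finset.Icc 1 k, mu i j = 1)
    (x : ℕ → ℝ → ℝ)
    (hxmono : ∀ j ∈ Finset.Icc 1 k, MonotoneOn (x j) (Set.Icc 0 V))
    (hxrange : ∀ j ∈ Finset.Icc 1 k, ∀ t ∈ Set.Icc (0 : ℝ) V, x j t ∈ Set.Icc (0 : ℝ) 1)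
    (hxIC : ∀ j ∈ Finset.Icc 2 k, ∀ t ∈ Set.Icc (0 : ℝ) V,
      (∫ s in (0 : ℝ)..t, x (j - 1) s) ≤ ∫ s in (0 : ℝ)..t, x j s)
    (xhat : ℕ → ℝ → ℝ)
    (hxhatV : ∀ j ∈ Finset.Icc 1 k, xhat j V = x j V)
    (hxhatdef : ∀ j ∈ Finset.Icc 1 k, ∀ i ≤ m, w i < V → ∀ t, w i ≤ t → t < w (i + 1) →
      xhat j t = (∫ s in (w i)..(w (i + 1)), x j s) / (w (i + 1) - w i)) :
    (∀ j ∈ Finset.Icc 1 k, MonotoneOn (xhat j) (Set.Icc 0 V)) ∧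
    (∀ j ∈ Finset.Icc 1 k, ∀ t ∈ Set.Icc (0 : ℝ) V, xhat j t ∈ Set.Icc (0 : ℝ) 1) ∧
    (∀ j ∈ Finset.Icc 1 k, ∀ i ≤ m + 1,
      (∫ t in (0 : ℝ)..(w i), xhat j t) = ∫ t in (0 : ℝ)..(w i), x j t) ∧
    (∀ j ∈ Finset.Icc 2 k, ∀ t ∈ Set.Icc (0 : ℝ) V,
      (∫ s in (0 : ℝ)..t, xhat (j - 1) s) ≤ ∫ s in (0 : ℝ)..t, xhat j s) ∧
    ((∑ i ∈ Finset.Icc 1 m, ∑ j ∈ Finset.Icc 1 k,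
        mu i j * (w i * x j (w i) - ∫ t in (0 : ℝ)..(w i), x j t)) ≤
      ∑ i ∈ Finset.Icc 1 m, ∑ j ∈ Finset.Icc 1 k,
        mu i j * (w i * xhat j (w i) - ∫ t in (0 : ℝ)..(w i), xhat j t)) := by
  have hgrid : IsGrid w m V := by
    refine ⟨hw0, fun i hi => ?_, hwm1⟩
    rcases hi.eq_or_lt with rfl | hi
    · rw [hwm1]; exact hwm
    · exact (hwmono i hi).le
  have hflat : ∀ j ∈ Finset.Icc 1 k, IsFlattening w m V (x j) (xhat j) := fun j hj =>
    ⟨hxhatV j hj, fun i hi t h1 h2 => hxhatdef j hj i hi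
      (h1.trans_lt (h2.trans_le (hgrid.mem_Icc (by omega)).2)) t h1 h2⟩
  refine ⟨fun j hj => flat_monotoneOn hgrid (hxmono j hj) (hflat j hj),
    fun j hj => flat_mem_Icc hgrid (hxmono j hj) (hxrange j hj) (hflat j hj),
    fun j hj i hi => flat_integral_grid hgrid (hxmono j hj) (hflat j hj) hi,
    fun j hj => ?_, ?_⟩
  · have hj' := Finset.mem_Icc.1 hj
    have ha : j - 1 ∈ Finset.Icc 1 k := Finset.mem_Icc.2 (by omega)
    have hb : j ∈ Finset.Icc 1 k := Finset.mem_Icc.2 (by omega)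
    exact flat_integral_le hgrid (hxmono _ ha) (hxmono _ hb) (hflat _ ha) (hflat _ hb) (hxIC j hj)
  · refine Finset.sum_le_sum fun i hi => Finset.sum_le_sum fun j hj => ?_
    have hi' : i ≤ m + 1 := by have := (Finset.mem_Icc.1 hi).2; omega
    rw [flat_integral_grid hgrid (hxmono j hj) (hflat j hj) hi']
    refine mul_le_mul_of_nonneg_left (sub_le_sub_right ?_ _) (hmu0 i hi j hj)
    exact mul_le_mul_of_nonneg_left (flat_ge_grid hgrid (hxmono j hj) (hflat j hj) hi')
      (hgrid.mem_Icc hi').1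
end

section
/- There exists a feasible x_hat with Obj(x_hat) >= Obj(x) for every feasible x (an optimal solution) such that the following alignment property holds: for every 0 <= i <= m and 1 <= j <= k-1, if mu(i', j') = 0 for every 1 <= i' <= i and every j' with j < j' <= k, then x_hat_{i'j'} = x_hat_{i'j} for every 0 <= i' <= i and every j' with j < j' <= k. -/
/-!
Write `U_j` for the convex piecewise linear function with `U_j (w i) = Area_x(i, j)`; its slope on
`[w i, w (i+1)]` is `x i j`, and feasibility says that the slopes lie in `[0, 1]` and that
`U_j ≤ U_{j+1}`. The objective rewards large slopes and small values of `U`.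

An optimal solution exists by compactness (`exists_optimal`). Any feasible `x` is turned into an
aligned one of no smaller objective, one deadline at a time. Let `N j` be the largest index up to
which no value has a deadline after `j`. Given the new curve `Û_j ≤ U_j`, the new curve `Û_{j+1}`
follows `Û_j` up to `w (N j + 1)`, then the tangent from that point to the graph of `U_{j+1}`
(with slope at most `1`), and then `U_{j+1}` itself. This curve is convex and lies between `Û_j` and
`U_{j+1}`, and beyond `w (N j + 1)` its slopes are at least those of `U_{j+1}`. Hence no type
`(i, j+1)` with `i > N j` contributes less, while the types with `i ≤ N j` have no mass
(`exists_tangent_curve`). Since `N` is nondecreasing in `j`, agreement of consecutive curves up to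
`N j` gives the full alignment property.
-/

/-- `Area_x(i, j) = ∑_{i' = 0}^{i-1} (w (i'+1) - w i') * x i' j`. -/
def AreaD (w : ℕ → ℝ) (x : ℕ → ℕ → ℝ) (i j : ℕ) : ℝ :=
  ∑ i' ∈ Finset.range i, (w (i' + 1) - w i') * x i' j

/-- Feasibility for the finite deadlines program: for every deadline `j`,
`0 ≤ x 0 j ≤ x 1 j ≤ ⋯ ≤ x m j ≤ 1`, and the inter-deadline IC constraints
`Area_x(i, j) ≤ Area_x(i, j+1)`. -/
def FeasD (m k : ℕ) (w : ℕ → ℝ) (x : ℕ → ℕ → ℝ) : Prop :=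
  (∀ j ∈ Finset.Icc 1 k, 0 ≤ x 0 j ∧ (∀ i < m, x i j ≤ x (i + 1) j) ∧ x m j ≤ 1) ∧
  (∀ i ∈ Finset.Icc 1 m, ∀ j, 1 ≤ j → j + 1 ≤ k → AreaD w x i j ≤ AreaD w x i (j + 1))

/-- The deadlines objective `Obj(x) = ∑ i j, μ i j * (w i * x i j - Area_x(i, j))`. -/
def ObjD (m k : ℕ) (w : ℕ → ℝ) (mu : ℕ → ℕ → ℝ) (x : ℕ → ℕ → ℝ) : ℝ :=
  ∑ i ∈ Finset.Icc 1 m, ∑ j ∈ Finset.Icc 1 k, mu i j * (w i * x i j - AreaD w x i j)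

/-! ### Curves and their slopes -/

/-- The value at `w l` of the piecewise linear function that vanishes at `w 0` and has slope `z i`
on `[w i, w (i+1)]`. -/
def curve (w z : ℕ → ℝ) (l : ℕ) : ℝ :=
  ∑ i ∈ Finset.range l, (w (i + 1) - w i) * z i

/-- The slopes `z 0, …, z m` are nondecreasing and lie in `[0, 1]`. -/
def IsAlloc (m : ℕ) (z : ℕ → ℝ) : Prop :=
  0 ≤ z 0 ∧ (∀ i < m, z i ≤ z (i + 1)) ∧ z m ≤ 1

lemma curve_succ (w z : ℕ → ℝ) (l : ℕ) :
    curve w z (l + 1) = curve w z l + (w (l + 1) - w l) * z l :=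
  Finset.sum_range_succ _ _

lemma mono_of_chain {m : ℕ} {z : ℕ → ℝ} (h : ∀ i < m, z i ≤ z (i + 1)) {a b : ℕ}
    (hab : a ≤ b) (hb : b ≤ m) : z a ≤ z b := by
  induction b, hab using Nat.le_induction with
  | base => exact le_rfl
  | succ b _ ih => exact (ih (by omega)).trans (h b (by omega))

lemma IsAlloc.mem_Icc {m : ℕ} {z : ℕ → ℝ} (h : IsAlloc m z) {i : ℕ} (hi : i ≤ m) :
    0 ≤ z i ∧ z i ≤ 1 :=
  ⟨h.1.trans (mono_of_chain h.2.1 (Nat.zero_le i) hi),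
    (mono_of_chain h.2.1 hi le_rfl).trans h.2.2⟩

/-- The increments of one curve dominate those of another wherever the slopes do. -/
lemma curve_sub_le {m : ℕ} {w u v : ℕ → ℝ} (hw : ∀ i < m, w i < w (i + 1)) {a b : ℕ}
    (hab : a ≤ b) (hb : b ≤ m) (h : ∀ i, a ≤ i → i < b → u i ≤ v i) :
    curve w u b - curve w u a ≤ curve w v b - curve w v a := by
  induction b, hab using Nat.le_induction with
  | base => simp
  | succ b hb' ih =>
    have h1 := ih (by omega) (fun i hi hi' => h i hi (by omega))
    have h2 := mul_le_mul_of_nonneg_left (h b hb' (by omega))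
      (sub_nonneg.2 (hw b (by omega)).le)
    rw [curve_succ, curve_succ]
    linarith

lemma curve_const (w : ℕ → ℝ) (s : ℝ) (l : ℕ) : curve w (fun _ => s) l = s * (w l - w 0) := by
  rw [curve, ← Finset.sum_mul, Finset.sum_range_sub, mul_comm]

/-! ### The tangent construction -/

/-- The largest slope `s ≤ 1` of a line through `(w n, p)` that stays below the curve `X` at the
points `w t`, `n < t ≤ m`: either it is `1`, or the line touches the curve. -/
lemma exists_tangent_slope {m n : ℕ} (hn : n ≤ m) {w : ℕ → ℝ} (hw : ∀ i < m, w i < w (i + 1))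
    (X : ℕ → ℝ) (p : ℝ) :
    ∃ s : ℝ, s ≤ 1 ∧ (∀ t, n < t → t ≤ m → s * (w t - w n) ≤ X t - p) ∧
      (s = 1 ∨ ∃ t, n < t ∧ t ≤ m ∧ s * (w t - w n) = X t - p) := by
  have hpos : ∀ t, n < t → t ≤ m → 0 < w t - w n := by
    intro t h1 h2
    have := mono_of_chain (fun i hi => (hw i hi).le) (Nat.succ_le_of_lt h1) h2
    have := hw n (by omega)
    linarith
  -- The cap `1` is recorded as the value at the otherwise unused index `n`.
  obtain ⟨a, ha, hmin⟩ := Finset.exists_min_image (Finset.Icc n m)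
    (fun t => if t = n then (1 : ℝ) else (X t - p) / (w t - w n)) ⟨n, by simp [hn]⟩
  rw [Finset.mem_Icc] at ha
  refine ⟨_, by simpa using hmin n (by simp [hn]), fun t h1 h2 => ?_, ?_⟩
  · have := hmin t (Finset.mem_Icc.2 ⟨h1.le, h2⟩)
    rw [if_neg (show t ≠ n by omega), le_div_iff₀ (hpos t h1 h2)] at this
    exact this
  · by_cases h : a = n
    · left; simp [h]
    · right
      refine ⟨a, by omega, ha.2, ?_⟩
      simp only [if_neg h]
      exact div_mul_cancel₀ _ (hpos a (by omega) ha.2).ne'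

/-- Suppose the curve with slopes `u` lies below the one with slopes `x`. If it is left at `w n` along
the tangent to the upper curve, the result is a convex curve between the two whose slopes dominate `x` from `n` on. -/
lemma exists_tangent_curve {m n : ℕ} (hn : 1 ≤ n) {w : ℕ → ℝ} (hw : ∀ i < m, w i < w (i + 1))
    {u x : ℕ → ℝ} (hu : IsAlloc m u) (hx : IsAlloc m x)
    (hux : ∀ l ≤ m, curve w u l ≤ curve w x l) :
    ∃ y : ℕ → ℝ, IsAlloc m y ∧ (∀ l ≤ m, curve w u l ≤ curve w y l) ∧
      (∀ l ≤ m, curve w y l ≤ curve w x l) ∧ (∀ l < n, y l = u l) ∧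
      (∀ l, n ≤ l → l ≤ m → x l ≤ y l) := by
  rcases Nat.lt_or_ge m n with hmn | hmn
  · exact ⟨u, hu, fun _ _ => le_rfl, hux, fun _ _ => rfl, fun l h1 h2 => by omega⟩
  obtain ⟨s, hs1, hs, htan⟩ := exists_tangent_slope hmn hw (curve w x) (curve w u n)
  -- Slopes of `x` are below `s` before the point of tangency and above it afterwards.
  set y : ℕ → ℝ := fun l => if l < n then u l else max s (x l) with hy
  have ylt : ∀ l < n, y l = u l := fun l hl => by simp [hy, hl]
  have yge : ∀ l, n ≤ l → y l = max s (x l) := fun l hl => by simp [hy, Nat.not_lt.2 hl]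
  have low : ∀ l ≤ n, curve w y l = curve w u l := fun l hl =>
    Finset.sum_congr rfl fun i hi => by
      rw [ylt i (lt_of_lt_of_le (Finset.mem_range.1 hi) hl)]
  have line : ∀ l, curve w (fun _ => s) l - curve w (fun _ => s) n = s * (w l - w n) := by
    intro l; rw [curve_const, curve_const]; ring
  have yline : ∀ l, n ≤ l → l ≤ m → s * (w l - w n) ≤ curve w y l - curve w u n := by
    intro l h1 h2
    have := curve_sub_le hw (u := fun _ => s) (v := y) h1 h2 fun i hi _ => by
      rw [yge i hi]; exact le_max_left _ _
    rw [line, low n le_rfl] at this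
    exact this
  -- Past a point of tangency `y` grows at least like `x`; before it, `u` lies below its chord.
  have key : (∀ l, n ≤ l → l ≤ m → curve w u l ≤ curve w y l) ∧ u n ≤ max s (x n) := by
    rcases htan with rfl | ⟨t, hnt, htm, ht⟩
    · refine ⟨fun l h1 h2 => ?_, (hu.mem_Icc hmn).2.trans (le_max_left _ _)⟩
      have := curve_sub_le hw (u := u) (v := y) h1 h2 fun i hi hi' => by
        rw [yge i hi]; exact (hu.mem_Icc (by omega)).2.trans (le_max_left _ _)
      have := low n le_rfl
      linarith
    · have hut := hux t htm
      constructor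
      · intro l h1 h2
        have hyl := yline l h1 h2
        rcases Nat.lt_or_ge l t with hlt | hlt
        · rcases le_or_gt (u l) s with hus | hus
          · have := curve_sub_le hw (u := u) (v := fun _ => s) h1 h2 fun i _ hi' =>
              (mono_of_chain hu.2.1 hi'.le h2).trans hus
            rw [line] at this
            linarith
          · have := curve_sub_le hw (u := fun _ => s) (v := u) hlt.le htm fun i hi hi' =>
              hus.le.trans (mono_of_chain hu.2.1 hi (by omega))
            have h3 := line l
            have h4 := line t
            linarith
        · have h3 := curve_sub_le hw (u := x) (v := y) hlt h2 fun i hi _ => by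
            rw [yge i (by omega)]; exact le_max_right _ _
          have h4 := yline t hnt.le htm
          have h5 := hux l h2
          linarith
      · by_contra hcon
        have hus : s < u n := (le_max_left _ _).trans_lt (not_le.1 hcon)
        have h3 := curve_sub_le hw (u := fun _ => s) (v := u) (a := n + 1) hnt htm
          fun i hi hi' => hus.le.trans (mono_of_chain hu.2.1 (by omega) (by omega))
        have h4 := curve_succ w u n
        have h5 := line (n + 1)
        have h6 := line t
        have h7 := mul_lt_mul_of_pos_left hus (sub_pos.2 (hw n (by omega)))
        nlinarith
  have hyx : ∀ l, n ≤ l → l ≤ m → curve w y l ≤ curve w x l := by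
    intro l h1
    induction l, h1 using Nat.le_induction with
    | base => intro h2; rw [low n le_rfl]; exact hux n h2
    | succ l h1 ih =>
      intro h2
      rcases le_or_gt s (x l) with h | h
      · rw [curve_succ, curve_succ, yge l h1, max_eq_right h]
        linarith [ih (by omega)]
      · -- All slopes of `x` between `n` and `l` are below `s`, so `y` is still on the line.
        have h3 := curve_sub_le hw (u := y) (v := fun _ => s) (show n ≤ l + 1 by omega) h2
          fun i hi hi' => by
            rw [yge i hi]
            exact max_le le_rfl ((mono_of_chain hx.2.1 (by omega) (by omega)).trans h.le)
        rw [line, low n le_rfl] at h3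
        linarith [hs (l + 1) (by omega) h2]
  refine ⟨y, ⟨?_, ?_, ?_⟩, ?_, ?_, ylt, ?_⟩
  · rw [ylt 0 (by omega)]; exact hu.1
  · intro i hi
    rcases lt_trichotomy (i + 1) n with h | h | h
    · rw [ylt i (by omega), ylt _ h]; exact hu.2.1 i hi
    · rw [ylt i (by omega), yge _ h.ge]
      refine (hu.2.1 i hi).trans ?_
      rw [h]; exact key.2
    · rw [yge i (by omega), yge _ h.le]
      exact max_le_max le_rfl (hx.2.1 i hi)
  · rw [yge m hmn]; exact max_le hs1 hx.2.2
  · intro l hl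
    rcases Nat.lt_or_ge l n with h | h
    · exact (low l h.le).ge
    · exact key.1 l h hl
  · intro l hl
    rcases Nat.lt_or_ge l n with h | h
    · exact (low l h.le).trans_le (hux l hl)
    · exact hyx l h hl
  · intro l h _
    rw [yge l h]; exact le_max_right _ _

/-! ### Existence of an optimal solution -/

lemma AreaD_congr {w : ℕ → ℝ} {x y : ℕ → ℕ → ℝ} {i j : ℕ} (h : ∀ i' < i, x i' j = y i' j) :
    AreaD w x i j = AreaD w y i j :=
  Finset.sum_congr rfl fun i' hi' => by rw [h i' (Finset.mem_range.1 hi')]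

/-- The program has an optimal solution: its values may be clipped to `[0, 1]` outside the relevant
index range, and the clipped feasible set is compact. -/
lemma exists_optimal (m k : ℕ) (w : ℕ → ℝ) (mu : ℕ → ℕ → ℝ) :
    ∃ x : ℕ → ℕ → ℝ, FeasD m k w x ∧
      ∀ y : ℕ → ℕ → ℝ, FeasD m k w y → ObjD m k w mu y ≤ ObjD m k w mu x := by
  have hcont : ∀ i j, Continuous fun x : ℕ → ℕ → ℝ => AreaD w x i j := by
    intro i j; unfold AreaD; fun_prop
  have hclosed : IsClosed {x : ℕ → ℕ → ℝ | FeasD m k w x} := by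
    simp only [FeasD, Set.ofPred_and, Set.ofPred_forall]
    refine IsClosed.inter (isClosed_iInter fun j => isClosed_iInter fun _ => ?_)
      (isClosed_iInter fun i => isClosed_iInter fun _ => isClosed_iInter fun j =>
        isClosed_iInter fun _ => isClosed_iInter fun _ => isClosed_le (hcont i j) (hcont i (j + 1)))
    refine IsClosed.inter (isClosed_le (by fun_prop) (by fun_prop)) (IsClosed.inter
      (isClosed_iInter fun i => isClosed_iInter fun _ => isClosed_le (by fun_prop) (by fun_prop))
      (isClosed_le (by fun_prop) (by fun_prop)))
  have hbox : IsCompact (Set.univ.pi fun _ : ℕ => Set.univ.pi fun _ : ℕ => Set.Icc (0 : ℝ) 1) :=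
    isCompact_univ_pi fun _ => isCompact_univ_pi fun _ => isCompact_Icc
  have hobj : Continuous fun x : ℕ → ℕ → ℝ => ObjD m k w mu x := by
    unfold ObjD
    refine continuous_finsetSum _ fun i _ => continuous_finsetSum _ fun j _ => ?_
    have := hcont i j
    fun_prop
  have h0 : FeasD m k w 0 := by simp [FeasD, AreaD]
  obtain ⟨x, hx, hmax⟩ := (hbox.inter_right hclosed).exists_isMaxOn
    ⟨0, fun _ _ _ _ => ⟨le_rfl, zero_le_one⟩, h0⟩ hobj.continuousOn
  refine ⟨x, hx.2, fun y hy => ?_⟩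
  set z : ℕ → ℕ → ℝ := fun i j => max 0 (min 1 (y i j)) with hz
  have hzy : ∀ i ≤ m, ∀ j, 1 ≤ j → j ≤ k → z i j = y i j := by
    intro i hi j h1 h2
    obtain ⟨ha, hb⟩ := IsAlloc.mem_Icc (z := fun i => y i j) (hy.1 j (Finset.mem_Icc.2 ⟨h1, h2⟩)) hi
    simp only [hz]
    rw [min_eq_right hb, max_eq_right ha]
  have hA : ∀ i ≤ m, ∀ j, 1 ≤ j → j ≤ k → AreaD w z i j = AreaD w y i j := fun i hi j h1 h2 =>
    AreaD_congr fun i' hi' => hzy i' (by omega) j h1 h2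
  have hzfeas : FeasD m k w z := by
    refine ⟨fun j hj => ?_, fun i hi j h1 h2 => ?_⟩
    · obtain ⟨h1, h2⟩ := Finset.mem_Icc.1 hj
      obtain ⟨ha, hb, hc⟩ := hy.1 j hj
      refine ⟨?_, fun i hi => ?_, ?_⟩
      · rwa [hzy 0 (by omega) j h1 h2]
      · rw [hzy i hi.le j h1 h2, hzy (i + 1) hi j h1 h2]; exact hb i hi
      · rwa [hzy m le_rfl j h1 h2]
    · have him := (Finset.mem_Icc.1 hi).2
      rw [hA i him j h1 (by omega), hA i him (j + 1) (by omega) h2]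
      exact hy.2 i hi j h1 h2
  have hzobj : ObjD m k w mu z = ObjD m k w mu y := by
    refine Finset.sum_congr rfl fun i hi => Finset.sum_congr rfl fun j hj => ?_
    rw [Finset.mem_Icc] at hi hj
    rw [hzy i hi.2 j hj.1 hj.2, hA i hi.2 j hj.1 hj.2]
  rw [← hzobj]
  refine hmax (show z ∈ _ from ⟨?_, hzfeas⟩)
  simp only [Set.mem_pi, Set.mem_univ, true_implies, Set.mem_Icc]
  exact fun i j => ⟨le_max_left _ _, max_le zero_le_one (min_le_left _ _)⟩

/-! ### Alignment of a feasible solution -/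

/-- Every feasible `x` can be replaced by an aligned feasible solution of no smaller objective. -/
lemma exists_aligned (m k : ℕ) (w : ℕ → ℝ) (hw0 : w 0 = 0) (hw : ∀ i < m, w i < w (i + 1))
    (mu : ℕ → ℕ → ℝ) (hmu0 : ∀ i ∈ Finset.Icc 1 m, ∀ j ∈ Finset.Icc 1 k, 0 ≤ mu i j)
    (x : ℕ → ℕ → ℝ) (hx : FeasD m k w x) :
    ∃ xhat : ℕ → ℕ → ℝ, FeasD m k w xhat ∧ ObjD m k w mu x ≤ ObjD m k w mu xhat ∧
      (∀ i ≤ m, ∀ j, 1 ≤ j → j + 1 ≤ k →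
        (∀ i' ∈ Finset.Icc 1 m, i' ≤ i → ∀ j', j < j' → j' ≤ k → mu i' j' = 0) →
        ∀ i' ≤ i, ∀ j', j < j' → j' ≤ k → xhat i' j' = xhat i' j) := by
  classical
  let C : ℕ → ℕ → Prop := fun j i =>
    ∀ i' ∈ Finset.Icc 1 m, i' ≤ i → ∀ j', j < j' → j' ≤ k → mu i' j' = 0
  let N : ℕ → ℕ := fun j => Nat.findGreatest (C j) m
  have hN : ∀ j, C j (N j) := fun j =>
    Nat.findGreatest_spec (P := C j) (Nat.zero_le m) fun i' hi' h => by
      rw [Finset.mem_Icc] at hi'; omega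
  have hNle : ∀ j i, i ≤ m → C j i → i ≤ N j := fun j i hi h => Nat.le_findGreatest hi h
  have step : ∀ (n : ℕ) (u v : ℕ → ℝ), ∃ y : ℕ → ℝ, 1 ≤ n → IsAlloc m u → IsAlloc m v →
      (∀ l ≤ m, curve w u l ≤ curve w v l) →
      IsAlloc m y ∧ (∀ l ≤ m, curve w u l ≤ curve w y l) ∧
      (∀ l ≤ m, curve w y l ≤ curve w v l) ∧ (∀ l < n, y l = u l) ∧
      (∀ l, n ≤ l → l ≤ m → v l ≤ y l) := by
    intro n u v
    by_cases h : 1 ≤ n ∧ IsAlloc m u ∧ IsAlloc m v ∧ ∀ l ≤ m, curve w u l ≤ curve w v l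
    · obtain ⟨y, hy⟩ := exists_tangent_curve h.1 hw h.2.1 h.2.2.1 h.2.2.2
      exact ⟨y, fun _ _ _ _ => hy⟩
    · exact ⟨u, fun h1 h2 h3 h4 => absurd ⟨h1, h2, h3, h4⟩ h⟩
  choose T hT using step
  -- `z j` is the new column for the deadline `j + 1`.
  let z : ℕ → ℕ → ℝ := fun j => Nat.rec (fun i => x i 1)
    (fun j u => T (N (j + 1) + 1) u (fun i => x i (j + 2))) j
  have hz1 : ∀ j, z (j + 1) = T (N (j + 1) + 1) (z j) (fun i => x i (j + 2)) := fun _ => rfl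
  have hcol : ∀ j, j + 1 ≤ k → IsAlloc m (fun i => x i (j + 1)) := fun j hj =>
    hx.1 (j + 1) (Finset.mem_Icc.2 ⟨by omega, hj⟩)
  have hcmp : ∀ j, j + 2 ≤ k → ∀ l ≤ m,
      curve w (fun i => x i (j + 1)) l ≤ curve w (fun i => x i (j + 2)) l := by
    intro j hj l hl
    rcases Nat.eq_zero_or_pos l with rfl | h
    · simp [curve]
    · exact hx.2 l (Finset.mem_Icc.2 ⟨h, hl⟩) (j + 1) (by omega) hj
  have inv : ∀ j, j + 1 ≤ k → IsAlloc m (z j) ∧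
      ∀ l ≤ m, curve w (z j) l ≤ curve w (fun i => x i (j + 1)) l := by
    intro j
    induction j with
    | zero => exact fun h => ⟨hcol 0 h, fun _ _ => le_rfl⟩
    | succ j ih =>
      intro hj
      obtain ⟨h1, h2⟩ := ih (by omega)
      obtain ⟨ha, _, hc, _⟩ := hT (N (j + 1) + 1) (z j) (fun i => x i (j + 2)) (by omega) h1
        (hcol (j + 1) hj) fun l hl => (h2 l hl).trans (hcmp j hj l hl)
      exact ⟨ha, hc⟩
  have trans_step : ∀ j, j + 2 ≤ k → (∀ l ≤ m, curve w (z j) l ≤ curve w (z (j + 1)) l) ∧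
      (∀ l ≤ N (j + 1), z (j + 1) l = z j l) ∧
      (∀ l, N (j + 1) < l → l ≤ m → x l (j + 2) ≤ z (j + 1) l) := by
    intro j hj
    obtain ⟨h1, h2⟩ := inv j (by omega)
    obtain ⟨_, hb, _, hd, he⟩ := hT (N (j + 1) + 1) (z j) (fun i => x i (j + 2)) (by omega) h1
      (hcol (j + 1) hj) fun l hl => (h2 l hl).trans (hcmp j hj l hl)
    exact ⟨hb, fun l hl => hd l (by omega), fun l hl => he l (by omega)⟩
  refine ⟨fun i j => z (j - 1) i, ⟨fun j hj => ?_, fun i hi j h1 h2 => ?_⟩, ?_, ?_⟩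
  · rw [Finset.mem_Icc] at hj
    exact (inv (j - 1) (by omega)).1
  · obtain ⟨j, rfl⟩ := Nat.exists_eq_add_of_le' h1
    exact (trans_step j h2).1 i (Finset.mem_Icc.1 hi).2
  · refine Finset.sum_le_sum fun i hi => Finset.sum_le_sum fun j hj => ?_
    have hmu := hmu0 i hi j hj
    have him := (Finset.mem_Icc.1 hi).2
    obtain ⟨hj1, hjk⟩ := Finset.mem_Icc.1 hj
    obtain ⟨j, rfl⟩ := Nat.exists_eq_add_of_le' hj1
    have hA : AreaD w (fun i j => z (j - 1) i) i (j + 1) ≤ AreaD w x i (j + 1) :=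
      (inv j hjk).2 i him
    have hwi : 0 ≤ w i := by
      rw [← hw0]; exact mono_of_chain (fun i hi => (hw i hi).le) (Nat.zero_le i) him
    simp only [Nat.add_sub_cancel]
    cases j with
    | zero =>
      exact mul_le_mul_of_nonneg_left (sub_le_sub le_rfl hA) hmu
    | succ j =>
      rcases Nat.lt_or_ge (N (j + 1)) i with h | h
      · exact mul_le_mul_of_nonneg_left (sub_le_sub (mul_le_mul_of_nonneg_left
          ((trans_step j hjk).2.2 i h him) hwi) hA) hmu
      · rw [hN (j + 1) i hi h (j + 1 + 1) (by omega) hjk]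
        simp
  · intro i hi j h1 _ hC i' hi' j' hj'
    induction j', hj'.le using Nat.le_induction with
    | base => exact fun _ => rfl
    | succ j' hjj ih =>
      intro hk'
      obtain ⟨p, rfl⟩ := Nat.exists_eq_add_of_le' (h1.trans hjj)
      have hC' : C (p + 1) i := fun a ha hai b hb hbk => hC a ha hai b (by omega) hbk
      have hs := (trans_step p hk').2.1 i' (hi'.trans (hNle _ _ hi hC'))
      rcases hjj.eq_or_lt with rfl | hlt
      · exact hs
      · exact hs.trans (ih hlt (by omega))

/-- Alignment (Theorem on aligning allocation curves): the finite deadlines program has an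
optimal solution `x̂` such that for every `i ≤ m` and `1 ≤ j ≤ k - 1`, if no buyer with value
index at most `i` and deadline greater than `j` exists in `μ`, then `x̂ i' j' = x̂ i' j` for
every `i' ≤ i` and every `j < j' ≤ k`. -/
theorem stmt10
    (m k : ℕ) (hk : 1 ≤ k) (w : ℕ → ℝ)
    (hw0 : w 0 = 0)
    (hwmono : ∀ i < m, w i < w (i + 1))
    (mu : ℕ → ℕ → ℝ)
    (hmu0 : ∀ i ∈ Finset.Icc 1 m, ∀ j ∈ Finset.Icc 1 k, 0 ≤ mu i j)
    (hmu1 : ∑ i ∈ Finset.Icc 1 m, ∑ j ∈ Finset.Icc 1 k, mu i j = 1)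
    (hsupp : ∀ i ∈ Finset.Icc 1 m, ∃ j ∈ Finset.Icc 1 k, 0 < mu i j) :
    ∃ xhat : ℕ → ℕ → ℝ, FeasD m k w xhat ∧
      (∀ x : ℕ → ℕ → ℝ, FeasD m k w x → ObjD m k w mu x ≤ ObjD m k w mu xhat) ∧
      (∀ i ≤ m, ∀ j, 1 ≤ j → j + 1 ≤ k →
        (∀ i' ∈ Finset.Icc 1 m, i' ≤ i → ∀ j', j < j' → j' ≤ k → mu i' j' = 0) →
        ∀ i' ≤ i, ∀ j', j < j' → j' ≤ k → xhat i' j' = xhat i' j) := by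
  obtain ⟨x, hx, hopt⟩ := exists_optimal m k w mu
  obtain ⟨xhat, hfeas, hobj, halign⟩ := exists_aligned m k w hw0 hwmono mu hmu0 x hx
  exact ⟨xhat, hfeas, fun y hy => (hopt y hy).trans hobj, halign⟩
end

section
/- The supremum of (1-delta)*p_1 + delta*p_2 over all mechanisms equals 1 - delta + delta^2 * M, and it is attained by the mechanism (p_1, x_1, p_2, x_2) = (1-delta, 1-delta, delta*M + 1 - delta, 1). Consequently, the maximum achievable consumer surplus, namely the full welfare (1-delta)*1 + delta*M minus this optimal revenue, equals delta*(1-delta)*M. -/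
/-!
Upper bound by LP duality. Feasibility `x₂ ≤ 1` and (IC) give `p₂ ≤ M - M x₁ + p₁`, and (IR) gives
`x₁ ≥ p₁`, so the revenue is at most `δ M + (1 - δ M) p₁`. Since `δ M < 1` this increases in `p₁`,
and the budget `p₁ ≤ 1 - δ` yields `δ M + (1 - δ M) (1 - δ) = 1 - δ + δ² M`. All four constraints
are tight at the proposed mechanism.
-/

/-- A mechanism for the two-type private-budget instance `D_{M,δ}`: a quadruple
`(p₁, x₁, p₂, x₂)` satisfying (IC) `M x₂ - p₂ ≥ M x₁ - p₁`; (IR) `x₁ - p₁ ≥ 0` and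
`M x₂ - p₂ ≥ 0`; (Feasibility) `x₁, x₂ ∈ [0,1]`; (Budgets) `p₁ ≤ 1 - δ` and `p₂ ≤ M`. -/
def PrivMech (M δ : ℝ) (p1 x1 p2 x2 : ℝ) : Prop :=
  M * x1 - p1 ≤ M * x2 - p2 ∧
  0 ≤ x1 - p1 ∧ 0 ≤ M * x2 - p2 ∧
  0 ≤ x1 ∧ x1 ≤ 1 ∧ 0 ≤ x2 ∧ x2 ≤ 1 ∧
  p1 ≤ 1 - δ ∧ p2 ≤ M

/-- The optimal revenue of the instance `D_{M,δ}` is `1 - δ + δ² M`, attained by the mechanism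
`(p₁, x₁, p₂, x₂) = (1-δ, 1-δ, δM + 1 - δ, 1)`.  Consequently the maximum achievable consumer
surplus, the full welfare `(1-δ)·1 + δ·M` minus this optimal revenue, equals `δ(1-δ)M`. -/
theorem stmt13 (M δ : ℝ) (hM : 1 < M) (hδ : 0 < δ) (hδM : δ < 1 / M) :
    IsGreatest {r : ℝ | ∃ p1 x1 p2 x2 : ℝ, PrivMech M δ p1 x1 p2 x2 ∧
        r = (1 - δ) * p1 + δ * p2} (1 - δ + δ ^ 2 * M) ∧
    PrivMech M δ (1 - δ) (1 - δ) (δ * M + 1 - δ) 1 ∧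
    (1 - δ) * (1 - δ) + δ * (δ * M + 1 - δ) = 1 - δ + δ ^ 2 * M ∧
    ((1 - δ) * 1 + δ * M) - (1 - δ + δ ^ 2 * M) = δ * (1 - δ) * M := by
  have hM0 : 0 < M := by linarith
  have hδM1 : δ * M < 1 := (lt_div_iff₀ hM0).mp hδM
  have hδ1 : δ < 1 := by nlinarith
  have hmech : PrivMech M δ (1 - δ) (1 - δ) (δ * M + 1 - δ) 1 := by
    refine ⟨by linarith, by linarith, ?_, by linarith, by linarith, by norm_num, le_rfl, le_rfl, ?_⟩
    · nlinarith [mul_pos (sub_pos.mpr hM) (sub_pos.mpr hδ1)]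
    · nlinarith [mul_pos (sub_pos.mpr hM) (sub_pos.mpr hδ1)]
  refine ⟨⟨⟨_, _, _, _, hmech, by ring⟩, ?_⟩, hmech, by ring, by ring⟩
  rintro r ⟨p1, x1, p2, x2, ⟨hIC, hIR, -, -, -, -, hx2, hp1, -⟩, rfl⟩
  -- The dual multipliers: `δ` for (IC), `δ M` for `x₂ ≤ 1` and for (IR), `1 - δ M` for the budget.
  have h1 := mul_le_mul_of_nonneg_left hIC hδ.le
  have h2 := mul_le_mul_of_nonneg_left hx2 (mul_pos hδ hM0).le
  have h3 := mul_nonneg (mul_pos hδ hM0).le hIR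
  have h4 := mul_le_mul_of_nonneg_left hp1 (sub_pos.mpr hδM1).le
  linarith
end

section
/- Let g_1, g_2 > 0 with g_1 + g_2 = 1. Then every mechanism (p_1, x_1, p_2, x_2) that maximizes g_1*p_1 + g_2*p_2 over all mechanisms satisfies x_2 = 1, x_1 = p_1, and p_1 <= 1 - delta; in particular x_1 < 1, so no revenue-maximizing mechanism for a signal containing both types with positive probability allocates the item with probability 1 to the low type, i.e., such a signal admits no efficient revenue-optimal mechanism. -/
/-- For a signal containing both types with positive probability (`g₁, g₂ > 0`,
`g₁ + g₂ = 1`), every revenue-maximizing mechanism satisfies `x₂ = 1`, `x₁ = p₁`, and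
`p₁ ≤ 1 - δ`; in particular `x₁ < 1`, so such a signal admits no efficient revenue-optimal
mechanism. -/
theorem stmt14 (M δ : ℝ) (hM : 1 < M) (hδ : 0 < δ) (hδM : δ < 1 / M)
    (g1 g2 : ℝ) (hg1 : 0 < g1) (hg2 : 0 < g2) (hsum : g1 + g2 = 1)
    (p1 x1 p2 x2 : ℝ)
    (hmech : PrivMech M δ p1 x1 p2 x2)
    (hopt : ∀ q1 y1 q2 y2 : ℝ, PrivMech M δ q1 y1 q2 y2 →
      g1 * q1 + g2 * q2 ≤ g1 * p1 + g2 * p2) :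
    x2 = 1 ∧ x1 = p1 ∧ p1 ≤ 1 - δ ∧ x1 < 1 := by
  obtain ⟨hIC, hIR1, hIR2, hx1, hx1', hx2, hx2', hb1, hb2⟩ := hmech
  have hM1 : 0 < M - 1 := by linarith
  have e2 : x2 = 1 := by
    -- Fill up `x₂` to `1`, charging type 2 its full value for the increment.
    have h := hopt p1 x1 (p2 + M * (1 - x2)) 1
      ⟨by linarith, hIR1, by linarith, hx1, hx1', by norm_num, le_rfl, hb1, by linarith⟩
    by_contra hne
    have hlt : 0 < 1 - x2 := sub_pos.mpr (lt_of_le_of_ne hx2' hne)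
    have hgain : 0 < g2 * (M * (1 - x2)) := by positivity
    linarith
  have e1 : x1 = p1 := by
    by_contra hne
    have hlt : p1 < x1 := lt_of_le_of_ne (by linarith) (Ne.symm hne)
    subst e2
    rcases le_or_gt 0 p1 with hp | hp
    · -- Lowering `x₁` to `p₁` relaxes (IC); raise `p₂` until (IC) binds again.
      have hr : 0 ≤ (M - 1) * p1 := by positivity
      have h := hopt p1 p1 (M - (M - 1) * p1) 1
        ⟨by linarith, by linarith, by linarith, hp, by linarith, by norm_num, le_rfl, hb1,
          by linarith⟩
      have hslack : 0 < M * (x1 - p1) := mul_pos (by linarith) (by linarith)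
      have hgain : 0 < g2 * (M - (M - 1) * p1 - p2) := mul_pos hg2 (by linarith)
      linarith
    · -- `x₁` cannot be lowered to a negative `p₁`: serve only type 2, at price `M`.
      have hδ1 : δ < 1 := hδM.trans ((div_lt_one (by linarith)).mpr hM)
      have h := hopt 0 0 M 1
        ⟨by linarith, by linarith, by linarith, le_rfl, by norm_num, by norm_num, le_rfl,
          by linarith, le_rfl⟩
      have hgain1 : 0 < g1 * (0 - p1) := mul_pos hg1 (by linarith)
      have hgain2 : 0 ≤ g2 * (M - p2) := mul_nonneg hg2.le (by linarith)
      linarith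
  exact ⟨e2, e1, hb1, by linarith⟩
end

section
/- Let x be feasible, let 0 <= i_0 <= m and 1 <= j_0 <= k-1, and suppose x_{i(j_0+1)} = x_{i j_0} for every 0 <= i < i_0. If i_0 < m, suppose additionally that the set Y = { y >= 0 : Area_x(i_0+1, j_0) + (w_{i'} - w_{i_0+1})*y = Area_x(i', j_0+1) for some i_0 < i' <= m } is nonempty, let y be the minimum of Y, and set y' = min{y, 1}. Define x' by: x'_{ij} = x_{ij} for every (i,j) with j not equal to j_0+1 or with i < i_0; x'_{i_0 (j_0+1)} = x_{i_0 j_0}; and, if i_0 < m, x'_{i (j_0+1)} = max{y', x_{i (j_0+1)}} for every i_0 < i <= m. Then x' is feasible. -/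
theorem area_succ (w : ℕ → ℝ) (x : ℕ → ℕ → ℝ) (i j : ℕ) :
    AreaD w x (i + 1) j = AreaD w x i j + (w (i + 1) - w i) * x i j := by
  simp [AreaD, Finset.sum_range_succ]

theorem area_congr (w : ℕ → ℝ) {x x' : ℕ → ℕ → ℝ} {i j j' : ℕ}
    (h : ∀ l < i, x l j = x' l j') : AreaD w x i j = AreaD w x' i j' := by
  unfold AreaD
  exact Finset.sum_congr rfl fun l hl => by rw [h l (Finset.mem_range.1 hl)]

theorem area_sub_le_area_sub {m : ℕ} {w : ℕ → ℝ} (hw : ∀ i < m, w i < w (i + 1))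
    {x x' : ℕ → ℕ → ℝ} {j j' a b : ℕ} (hab : a ≤ b) (hb : b ≤ m)
    (h : ∀ l, a ≤ l → l < b → x l j ≤ x' l j') :
    AreaD w x b j - AreaD w x a j ≤ AreaD w x' b j' - AreaD w x' a j' := by
  induction b, hab using Nat.le_induction with
  | base => simp
  | succ n hn ih =>
    have h1 := ih (by omega) fun l h1 h2 => h l h1 (by omega)
    have h2 := mul_le_mul_of_nonneg_left (h n hn (by omega)) (sub_nonneg.2 (hw n (by omega)).le)
    rw [area_succ, area_succ]
    linarith

theorem area_const (w : ℕ → ℝ) (c : ℝ) (i j : ℕ) :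
    AreaD w (fun _ _ => c) i j = (w i - w 0) * c := by
  rw [AreaD, ← Finset.sum_mul, Finset.sum_range_sub]

theorem area_sub_le_const {m : ℕ} {w : ℕ → ℝ} (hw : ∀ i < m, w i < w (i + 1))
    {x : ℕ → ℕ → ℝ} {j a b : ℕ} {c : ℝ} (hab : a ≤ b) (hb : b ≤ m)
    (h : ∀ l, a ≤ l → l < b → x l j ≤ c) :
    AreaD w x b j - AreaD w x a j ≤ (w b - w a) * c := by
  have := area_sub_le_area_sub hw (x' := fun _ _ => c) (j' := 0) hab hb h
  rw [area_const, area_const] at this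
  linarith

theorem const_le_area_sub {m : ℕ} {w : ℕ → ℝ} (hw : ∀ i < m, w i < w (i + 1))
    {x : ℕ → ℕ → ℝ} {j a b : ℕ} {c : ℝ} (hab : a ≤ b) (hb : b ≤ m)
    (h : ∀ l, a ≤ l → l < b → c ≤ x l j) :
    (w b - w a) * c ≤ AreaD w x b j - AreaD w x a j := by
  have := area_sub_le_area_sub hw (x := fun _ _ => c) (j := 0) hab hb h
  rw [area_const, area_const] at this
  linarith

theorem le_of_step_le {m : ℕ} {f : ℕ → ℝ} (h : ∀ i < m, f i ≤ f (i + 1)) {a b : ℕ} (hab : a ≤ b)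
    (hb : b ≤ m) : f a ≤ f b := by
  induction b, hab using Nat.le_induction with
  | base => exact le_rfl
  | succ n hn ih => exact (ih (by omega)).trans (h n (by omega))

/-- Discrete convexity: if the area curve of a monotone column lies below a line of slope `y` through
one of its points `a` at a later index `t`, then it lies below that line between `a` and `t`. -/
theorem area_le_line_of_endpoint {m : ℕ} {w : ℕ → ℝ} (hw : ∀ i < m, w i < w (i + 1))
    {x : ℕ → ℕ → ℝ} {j a i t : ℕ} {y : ℝ} (hx : ∀ i < m, x i j ≤ x (i + 1) j)
    (hai : a ≤ i) (hit : i ≤ t) (ht : t ≤ m)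
    (h : AreaD w x t j ≤ AreaD w x a j + (w t - w a) * y) :
    AreaD w x i j ≤ AreaD w x a j + (w i - w a) * y := by
  rcases hit.eq_or_lt with rfl | hit
  · exact h
  -- Slopes are at most `y` before `i`, or at least `y` from `i` on.
  rcases le_total (x i j) y with hy | hy
  · have := area_sub_le_const hw (x := x) (j := j) (c := y) hai (by omega)
      fun l _ h2 => (le_of_step_le (f := fun l => x l j) hx h2.le (by omega)).trans hy
    linarith
  · have := const_le_area_sub hw (x := x) (j := j) (c := y) hit.le ht
      fun l h1 _ => hy.trans (le_of_step_le (f := fun l => x l j) hx h1 (by omega))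
    linarith

/-- The least slope `y` at which the line through `(w a, α)` meets the nondecreasing curve `B` at an
index `≥ a` gives a line below `B` on all of these indices. If `B a = α`, every slope qualifies and
`y = 0`; otherwise each later index contributes exactly one slope. -/
theorem line_le_area_of_isLeast {m a : ℕ} {w B : ℕ → ℝ} (hw : ∀ i < m, w i < w (i + 1))
    {α y : ℝ} (hB : ∀ i, a ≤ i → i ≤ m → α ≤ B i)
    (hy : ∀ z, 0 ≤ z → (∃ i, a ≤ i ∧ i ≤ m ∧ α + (w i - w a) * z = B i) → y ≤ z)
    {i : ℕ} (hi : a ≤ i) (him : i ≤ m) : α + (w i - w a) * y ≤ B i := by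
  rcases hi.eq_or_lt with rfl | hlt
  · simpa using hB a le_rfl him
  have hpos : 0 < w i - w a := by
    have := le_of_step_le (f := w) (fun i h => (hw i h).le) (show a + 1 ≤ i by omega) him
    linarith [hw a (by omega)]
  have := hy ((B i - α) / (w i - w a)) (div_nonneg (sub_nonneg.2 (hB i hi him)) hpos.le)
    ⟨i, hi, him, by field_simp; ring⟩
  rw [le_div_iff₀ hpos] at this
  linarith

/-- One step of the `Align` procedure preserves feasibility: if `x` is feasible,
`x i (j₀+1) = x i j₀` for all `i < i₀`, and (when `i₀ < m`) `y` is the least element of the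
set `Y` of nonnegative slopes `z` for which the line through `(w (i₀+1), Area_x(i₀+1, j₀))`
with slope `z` meets the curve `Area_x(·, j₀+1)` at some `i₀ < i' ≤ m`, then the modified
solution `x'` — which agrees with `x` except that `x' i₀ (j₀+1) = x i₀ j₀` and
`x' i (j₀+1) = max (min y 1) (x i (j₀+1))` for `i₀ < i ≤ m` — is feasible. -/
theorem stmt17
    (m k : ℕ) (hk : 1 ≤ k) (w : ℕ → ℝ)
    (hw0 : w 0 = 0)
    (hwmono : ∀ i < m, w i < w (i + 1))
    (mu : ℕ → ℕ → ℝ)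
    (hmu0 : ∀ i ∈ Finset.Icc 1 m, ∀ j ∈ Finset.Icc 1 k, 0 ≤ mu i j)
    (hmu1 : ∑ i ∈ Finset.Icc 1 m, ∑ j ∈ Finset.Icc 1 k, mu i j = 1)
    (x : ℕ → ℕ → ℝ)
    (hx : FeasD m k w x)
    (i0 j0 : ℕ) (hi0 : i0 ≤ m) (hj0 : 1 ≤ j0) (hj0k : j0 + 1 ≤ k)
    (hprev : ∀ i < i0, x i (j0 + 1) = x i j0)
    (y : ℝ)
    (hy : i0 < m → IsLeast {z : ℝ | 0 ≤ z ∧ ∃ i', i0 < i' ∧ i' ≤ m ∧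
      AreaD w x (i0 + 1) j0 + (w i' - w (i0 + 1)) * z = AreaD w x i' (j0 + 1)} y)
    (x' : ℕ → ℕ → ℝ)
    (hx'1 : ∀ i j, (j ≠ j0 + 1 ∨ i < i0) → x' i j = x i j)
    (hx'2 : x' i0 (j0 + 1) = x i0 j0)
    (hx'3 : i0 < m → ∀ i, i0 < i → i ≤ m →
      x' i (j0 + 1) = max (min y 1) (x i (j0 + 1))) :
    FeasD m k w x' := by
  obtain ⟨hbox, hic⟩ := hx
  obtain ⟨hA0, hAs, hAm⟩ := hbox j0 (by simp; omega)
  obtain ⟨hB0, hBs, hBm⟩ := hbox (j0 + 1) (by simp; omega)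
  have hAB : ∀ i, 1 ≤ i → i ≤ m → AreaD w x i j0 ≤ AreaD w x i (j0 + 1) := fun i h1 h2 =>
    hic i (by simp; omega) j0 hj0 hj0k
  have hA1 : ∀ i ≤ m, x i j0 ≤ 1 := fun i h =>
    (le_of_step_le (f := fun l => x l j0) hAs h le_rfl).trans hAm
  have hB1 : ∀ i ≤ m, x i (j0 + 1) ≤ 1 := fun i h =>
    (le_of_step_le (f := fun l => x l (j0 + 1)) hBs h le_rfl).trans hBm
  have hBnn : ∀ i ≤ m, 0 ≤ x i (j0 + 1) := fun i h =>
    hB0.trans (le_of_step_le (f := fun l => x l (j0 + 1)) hBs (Nat.zero_le i) h)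
  have hother : ∀ i j, j ≠ j0 + 1 → AreaD w x' i j = AreaD w x i j := fun i j h =>
    area_congr w fun l _ => hx'1 l j (Or.inl h)
  have hlow : ∀ i ≤ i0, AreaD w x' i (j0 + 1) = AreaD w x i (j0 + 1) := fun i h =>
    area_congr w fun l hl => hx'1 l _ (Or.inr (by omega))
  have hlow' : ∀ i ≤ i0, AreaD w x i (j0 + 1) = AreaD w x i j0 := fun i h =>
    area_congr w fun l hl => hprev l (by omega)
  have hstart : AreaD w x' (i0 + 1) (j0 + 1) = AreaD w x (i0 + 1) j0 := by
    rw [area_succ, area_succ, hlow i0 le_rfl, hlow' i0 le_rfl, hx'2]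
  have hslope : i0 < m → x i0 j0 ≤ x i0 (j0 + 1) := by
    intro h
    have h1 := hAB (i0 + 1) (by omega) h
    rw [area_succ, area_succ, hlow' i0 le_rfl] at h1
    exact le_of_mul_le_mul_left (by linarith) (sub_pos.2 (hwmono i0 h))
  have hmax : i0 < m → ∀ i, i0 < i → i ≤ m →
      min y 1 ≤ x' i (j0 + 1) ∧ x i (j0 + 1) ≤ x' i (j0 + 1) := by
    intro h i h1 h2
    rw [hx'3 h i h1 h2]
    exact ⟨le_max_left _ _, le_max_right _ _⟩
  have hcurve : ∀ i, 1 ≤ i → i ≤ m → AreaD w x i j0 ≤ AreaD w x' i (j0 + 1) ∧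
      AreaD w x' i (j0 + 1) ≤ AreaD w x i (j0 + 1) := by
    intro i h1 him
    rcases Nat.lt_or_ge i0 i with hi | hi
    swap
    · rw [hlow i hi]
      exact ⟨hAB i h1 him, le_rfl⟩
    have hm : i0 < m := by omega
    obtain ⟨⟨-, t, ht, htm, hteq⟩, hmin⟩ := hy hm
    have hline : ∀ l, i0 + 1 ≤ l → l ≤ m →
        AreaD w x (i0 + 1) j0 + (w l - w (i0 + 1)) * y ≤ AreaD w x l (j0 + 1) := by
      intro l hl hlm
      refine line_le_area_of_isLeast (B := fun l => AreaD w x l (j0 + 1)) hwmono ?_ ?_ hl hlm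
      · intro p hp hpm
        have := const_le_area_sub hwmono (x := x) (j := j0 + 1) (c := 0) hp hpm
          fun q _ _ => hBnn q (by omega)
        have := hAB (i0 + 1) (by omega) hm
        linarith
      · rintro z hz ⟨p, hp, hpm, he⟩
        exact hmin ⟨hz, p, hp, hpm, he⟩
    constructor
    · rcases le_total 1 y with hy1 | hy1
      · have := area_sub_le_area_sub hwmono (x := x) (x' := x') (j := j0) (j' := j0 + 1)
          (show i0 + 1 ≤ i from hi) him fun l h2 h3 => by
            have := (hmax hm l (by omega) (by omega)).1
            rw [min_eq_right hy1] at this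
            exact (hA1 l (by omega)).trans this
        linarith
      · have hge : ∀ l, i0 + 1 ≤ l → l ≤ m →
            AreaD w x (i0 + 1) j0 + (w l - w (i0 + 1)) * y ≤ AreaD w x' l (j0 + 1) := by
          intro l hl hlm
          have := const_le_area_sub hwmono (x := x') (j := j0 + 1) (c := y) hl hlm
            fun q h2 h3 => by
              have := (hmax hm q (by omega) (by omega)).1
              rwa [min_eq_left hy1] at this
          linarith
        rcases le_total i t with hit | hit
        · refine (area_le_line_of_endpoint hwmono hAs hi hit htm ?_).trans (hge i hi him)
          rw [hteq]
          exact hAB t (by omega) htm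
        · have h2 := area_sub_le_area_sub hwmono (x := x) (x' := x') (j := j0 + 1) (j' := j0 + 1)
            hit him fun l h2 h3 => (hmax hm l (by omega) (by omega)).2
          have h3 := hge t ht htm
          have h4 := hAB i h1 him
          linarith
    · clear h1
      induction i, hi using Nat.le_induction with
      | base => rw [hstart]; exact hAB _ (by omega) him
      | succ n hn ih =>
        have hn' : i0 < n := hn
        rcases le_total (x n (j0 + 1)) (min y 1) with hc | hc
        · have h2 := area_sub_le_const hwmono (x := x') (j := j0 + 1) (c := min y 1)
            (show i0 + 1 ≤ n + 1 by omega) him fun l h2 h3 => by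
              rw [hx'3 hm l (by omega) (by omega)]
              exact max_le le_rfl ((le_of_step_le (f := fun l => x l (j0 + 1)) hBs
                (show l ≤ n by omega) (by omega)).trans hc)
          have hwle : w (i0 + 1) ≤ w (n + 1) :=
            le_of_step_le (f := w) (fun i h => (hwmono i h).le) (by omega) him
          have h3 := mul_le_mul_of_nonneg_left (min_le_left y 1) (sub_nonneg.2 hwle)
          have h4 := hline (n + 1) (by omega) him
          linarith
        · rw [area_succ, area_succ, hx'3 hm n hn' (by omega), max_eq_right hc]
          linarith [ih (by omega)]
  refine ⟨?_, ?_⟩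
  · intro j hj
    rcases eq_or_ne j (j0 + 1) with rfl | hne
    swap
    · simp only [hx'1 _ j (Or.inl hne)]
      exact hbox j hj
    refine ⟨?_, ?_, ?_⟩
    · rcases Nat.eq_zero_or_pos i0 with h0 | h0
      · rw [h0] at hx'2
        rwa [hx'2, ← h0, h0]
      · rwa [hx'1 0 _ (Or.inr h0)]
    · intro i him
      rcases lt_trichotomy i i0 with h | h | h
      · rw [hx'1 i _ (Or.inr h)]
        rcases Nat.lt_or_ge (i + 1) i0 with h2 | h2
        · rw [hx'1 (i + 1) _ (Or.inr h2)]
          exact hBs i him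
        · obtain rfl : i0 = i + 1 := by omega
          rw [hx'2, hprev i h]
          exact hAs i him
      · subst h
        rw [hx'2]
        exact ((hslope him).trans (hBs i him)).trans (hmax him _ (by omega) him).2
      · rw [hx'3 (by omega) i h (by omega), hx'3 (by omega) (i + 1) (by omega) him]
        exact max_le_max le_rfl (hBs i him)
    · rcases hi0.eq_or_lt with rfl | h
      · rw [hx'2]
        exact hAm
      · rw [hx'3 h m h le_rfl]
        exact max_le (min_le_right _ _) hBm
  · intro i hi j hj hjk
    have hi' := Finset.mem_Icc.1 hi
    rcases eq_or_ne j (j0 + 1) with rfl | hne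
    · rw [hother i (j0 + 1 + 1) (by omega)]
      exact (hcurve i hi'.1 hi'.2).2.trans (hic i hi _ hj hjk)
    · rw [hother i j hne]
      rcases eq_or_ne j j0 with rfl | hne2
      · exact (hcurve i hi'.1 hi'.2).1
      · rw [hother i (j + 1) (by omega)]
        exact hic i hi j hj hjk
end
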